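/- arXiv:2206.14758 — 3 statements merged into one kernel-verified Lean document; each statement's English description precedes it below -/
import Mathlib

section
/- Let f : 𝔻ⁿ → 𝔻 be holomorphic and C²-smooth on the closed polydisc, and suppose f(ζ) = η for some ζ ∈ 𝕋ⁿ and η ∈ 𝕋. Then there exists a constant c > 0 such that for all sufficiently small δ > 0, the Lebesgue volume of {z ∈ 𝔻ⁿ : |f(z) - η| ≤ δ} is at least c·δ^{(3n+1)/2}. -/
open MeasureTheory Metric Set ENNReal

noncomputable section

/-- The open unit polydisc in `ℂⁿ`. -/
def polydisc (n : ℕ) : Set (Fin n → ℂ) := {z | ∀ j, ‖z j‖ < 1}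

/-- The closed unit polydisc in `ℂⁿ`. -/
def closedPolydisc (n : ℕ) : Set (Fin n → ℂ) := {z | ∀ j, ‖z j‖ ≤ 1}

/-- The distinguished boundary (torus) of the polydisc. -/
def torus (n : ℕ) : Set (Fin n → ℂ) := {z | ∀ j, ‖z j‖ = 1}

lemma closedPolydisc_eq (n : ℕ) : closedPolydisc n = closedBall (0 : Fin n → ℂ) 1 := by
  ext z
  simp [closedPolydisc, pi_norm_le_iff_of_nonneg]

lemma closedPolydisc_convex (n : ℕ) : Convex ℝ (closedPolydisc n) := by
  rw [closedPolydisc_eq]; exact convex_closedBall _ _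

lemma closedPolydisc_unique (n : ℕ) : UniqueDiffOn ℝ (closedPolydisc n) := by
  refine uniqueDiffOn_convex (closedPolydisc_convex n) ⟨0, ?_⟩
  rw [closedPolydisc_eq]
  exact ball_subset_interior_closedBall (by simp)

lemma taylor_bound (n : ℕ) (f : (Fin n → ℂ) → ℂ)
    (hsm : ContDiffOn ℝ 2 f (closedPolydisc n))
    (ζ : Fin n → ℂ) (hζ : ζ ∈ closedPolydisc n) :
    ∃ C > (0:ℝ), ∃ ρ > (0:ℝ), ∀ z ∈ closedPolydisc n, ‖z - ζ‖ < ρ →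
      ‖f z - f ζ - fderivWithin ℝ f (closedPolydisc n) ζ (z - ζ)‖ ≤ C * ‖z - ζ‖ ^ 2 := by
  have h1 : ContDiffOn ℝ 1 (fderivWithin ℝ f (closedPolydisc n)) (closedPolydisc n) :=
    hsm.fderivWithin (closedPolydisc_unique n) (by norm_num)
  have h2 := ((h1.differentiableOn (by norm_num)) ζ hζ).hasFDerivWithinAt.isBigO_sub
  obtain ⟨C, hC, h3⟩ := h2.exists_pos
  rw [Asymptotics.isBigOWith_iff, eventually_nhdsWithin_iff, Metric.eventually_nhds_iff] at h3
  obtain ⟨ρ, hρ, h4⟩ := h3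
  refine ⟨C, hC, ρ, hρ, fun z hz hzρ => ?_⟩
  have hd : DifferentiableOn ℝ f (closedPolydisc n) := hsm.differentiableOn (by norm_num)
  have := Convex.norm_image_sub_le_of_norm_hasFDerivWithin_le' (𝕜 := ℝ) (f := f)
    (s := closedPolydisc n ∩ closedBall ζ ‖z - ζ‖) (x := ζ) (y := z) (C := C * ‖z - ζ‖)
    (φ := fderivWithin ℝ f (closedPolydisc n) ζ)
    (f' := fun x => fderivWithin ℝ f (closedPolydisc n) x)
    (fun x hx => (hd x hx.1).hasFDerivWithinAt.mono inter_subset_left)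
    (fun x hx => by
      have hx2 : dist x ζ ≤ ‖z - ζ‖ := hx.2
      refine (h4 (lt_of_le_of_lt hx2 hzρ) hx.1).trans ?_
      rw [← dist_eq_norm x ζ]
      gcongr)
    ((closedPolydisc_convex n).inter (convex_closedBall _ _))
    ⟨hζ, by simp⟩ ⟨hz, by simp [dist_eq_norm]⟩
  calc _ ≤ _ := this
    _ = _ := by ring

lemma mem_unit {ζ : ℂ} (hζ : ‖ζ‖ = 1) (x y : ℝ) (h : x ^ 2 + y ^ 2 < 2 * x) :
    ‖ζ * (1 - (x + y * Complex.I))‖ < 1 := by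
  rw [norm_mul, hζ, one_mul, ← sq_lt_one_iff₀ (norm_nonneg _), ← Complex.normSq_eq_norm_sq,
    Complex.normSq_apply]
  simp
  nlinarith

lemma tangential (n : ℕ) (f : (Fin n → ℂ) → ℂ)
    (hsm : ContDiffOn ℝ 2 f (closedPolydisc n))
    (hmap : ∀ z ∈ polydisc n, ‖f z‖ < 1)
    (ζ : Fin n → ℂ) (hζ : ζ ∈ torus n) (η : ℂ) (hη : ‖η‖ = 1) (hfζ : f ζ = η)
    (y : Fin n → ℝ) :
    ((starRingEnd ℂ) η * fderivWithin ℝ f (closedPolydisc n) ζ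
      (fun j => ζ j * (y j * Complex.I))).re = 0 := by
  set A : ℝ := ‖y‖ ^ 2 + 1 with hA
  have hζc : ζ ∈ closedPolydisc n := fun j => (hζ j).le
  let γ : ℝ → Fin n → ℂ := fun t j =>
    ζ j * (1 - (((A * t ^ 2 : ℝ) : ℂ) + ((-(t * y j) : ℝ) : ℂ) * Complex.I))
  have hγ0 : γ 0 = ζ := by ext j; simp [γ]
  have hγ : HasDerivAt γ (fun j => ζ j * (y j * Complex.I)) 0 := by
    rw [hasDerivAt_pi]
    intro j
    have e1 : HasDerivAt (fun t : ℝ => ((A * t ^ 2 : ℝ) : ℂ)) ((0 : ℝ) : ℂ) 0 := by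
      apply HasDerivAt.ofReal_comp
      simpa using ((hasDerivAt_id (0:ℝ)).pow 2).const_mul A
    have e2 : HasDerivAt (fun t : ℝ => ((-(t * y j) : ℝ) : ℂ)) ((-(1 * y j) : ℝ) : ℂ) 0 := by
      apply HasDerivAt.ofReal_comp
      exact ((hasDerivAt_id (0:ℝ)).mul_const (y j)).neg
    have := (((e1.add (e2.mul_const Complex.I)).const_sub 1).const_mul (ζ j))
    refine this.congr_deriv ?_
    push_cast
    ring
  have hAp : 0 < A := by positivity
  have hmem : ∀ᶠ t in nhds (0:ℝ), t ≠ 0 → γ t ∈ polydisc n := by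
    have : ∀ᶠ t in nhds (0:ℝ), A ^ 2 * t ^ 2 < 1 := by
      have hc : ContinuousAt (fun t : ℝ => A ^ 2 * t ^ 2) 0 := by fun_prop
      exact hc.eventually_lt continuousAt_const (by simp)
    filter_upwards [this] with t ht h0 j
    apply mem_unit (hζ j)
    have hy : y j ^ 2 ≤ ‖y‖ ^ 2 := by
      rw [← sq_abs, ← Real.norm_eq_abs]
      have := norm_le_pi_norm y j
      gcongr
    have ht2 : 0 < t ^ 2 := by positivity
    nlinarith [mul_le_mul_of_nonneg_left hy ht2.le, mul_lt_mul_of_pos_left ht ht2]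
  have hmem' : ∀ᶠ t in nhds (0:ℝ), γ t ∈ closedPolydisc n := by
    filter_upwards [hmem] with t ht
    by_cases h : t = 0
    · rw [h, hγ0]; exact hζc
    · exact fun j => (ht h j).le
  have hd := ((hsm.differentiableOn (by norm_num)) ζ hζc).hasFDerivWithinAt
  have hcomp := hd.comp_hasDerivAt_of_eq (0:ℝ) hγ hmem' hγ0.symm
  have hre : HasDerivAt (fun t => ((starRingEnd ℂ) η * f (γ t)).re)
      (((starRingEnd ℂ) η * fderivWithin ℝ f (closedPolydisc n) ζ
      (fun j => ζ j * (y j * Complex.I))).re) 0 := by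
    have h := hcomp.const_mul ((starRingEnd ℂ) η)
    exact (Complex.reCLM.hasFDerivAt (x := (starRingEnd ℂ) η * f (γ 0))).comp_hasDerivAt (0:ℝ) h
  refine IsLocalMax.hasDerivAt_eq_zero ?_ hre
  filter_upwards [hmem] with t ht
  by_cases h : t = 0
  · rw [h]
  · have h1 := hmap _ (ht h)
    have : (starRingEnd ℂ) η * f (γ 0) = 1 := by
      rw [hγ0, hfζ, mul_comm, Complex.mul_conj, Complex.normSq_eq_norm_sq, hη]; simp
    rw [this]
    refine (Complex.re_le_norm _).trans ?_
    rw [norm_mul, RCLike.norm_conj, hη]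
    simpa using h1.le

lemma volume_box (a b c d : ℝ) :
    volume (Ioo a b ×ℂ Ioo c d) = ENNReal.ofReal (b - a) * ENNReal.ofReal (d - c) := by
  have : Ioo a b ×ℂ Ioo c d = Complex.measurableEquivRealProd ⁻¹' (Ioo a b ×ˢ Ioo c d) := by
    ext z; simp [Complex.mem_reProdIm, Complex.measurableEquivRealProd]
  rw [this, Complex.volume_preserving_equiv_real_prod.measure_preimage
    (measurableSet_Ioo.prod measurableSet_Ioo).nullMeasurableSet, Measure.volume_eq_prod,
    Measure.prod_prod, Real.volume_Ioo, Real.volume_Ioo]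

lemma volume_affine (n : ℕ) (ζ : Fin n → ℂ) (hζ : ζ ∈ torus n) (p : Fin n → ℂ)
    (A : Set (Fin n → ℂ)) :
    volume ((fun (w : Fin n → ℂ) j => ζ j * (p j - w j)) ⁻¹' A) ≤ volume A := by
  have : MeasurePreserving (fun (w : Fin n → ℂ) j => ζ j * (p j - w j)) volume volume := by
    refine volume_preserving_pi (f := fun j (w : ℂ) => ζ j * (p j - w)) fun j => ?_
    have h1 := (volume : Measure ℂ).measurePreserving_sub_left (p j)
    have h2 := (rotation ⟨ζ j, by simpa [Submonoid.unitSphere] using hζ j⟩).measurePreserving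
    exact h2.comp h1
  calc _ ≤ _ := Measure.le_map_apply this.measurable.aemeasurable A
    _ = _ := by rw [this.map_eq]

lemma pigeonhole_slab (n : ℕ) (Q : Set (Fin n → ℂ)) (ℓ : (Fin n → ℂ) → ℤ) (M : ℕ)
    (h : ∀ w ∈ Q, -(M:ℤ) ≤ ℓ w ∧ ℓ w ≤ M) :
    ∃ k, volume Q ≤ ((2 * M + 1 : ℕ) : ℝ≥0∞) * volume (Q ∩ ℓ ⁻¹' {k}) := by
  obtain ⟨k, -, hk⟩ := Finset.exists_max_image (Finset.Icc (-(M:ℤ)) M)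
    (fun k => volume (Q ∩ ℓ ⁻¹' {k})) ⟨0, by simp⟩
  refine ⟨k, ?_⟩
  have hsub : Q ⊆ ⋃ k ∈ Finset.Icc (-(M:ℤ)) M, (Q ∩ ℓ ⁻¹' {k}) := by
    intro w hw
    simp only [mem_iUnion]
    exact ⟨ℓ w, Finset.mem_Icc.2 (h w hw), hw, rfl⟩
  calc volume Q ≤ _ := measure_mono hsub
    _ ≤ _ := measure_biUnion_finset_le _ _
    _ ≤ _ := Finset.sum_le_card_nsmul _ _ _ hk
    _ = _ := by
      rw [nsmul_eq_mul, Int.card_Icc]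
      congr 2
      omega

theorem sublevel_lower_bound (n : ℕ) (f : (Fin n → ℂ) → ℂ)
    (hhol : DifferentiableOn ℂ f (polydisc n))
    (hsm : ContDiffOn ℝ 2 f (closedPolydisc n))
    (hmap : ∀ z ∈ polydisc n, ‖f z‖ < 1)
    (ζ : Fin n → ℂ) (hζ : ζ ∈ torus n) (η : ℂ) (hη : ‖η‖ = 1) (hfζ : f ζ = η) :
    ∃ c > (0:ℝ), ∃ δ₀ > (0:ℝ), ∀ δ : ℝ, 0 < δ → δ < δ₀ →
      ENNReal.ofReal (c * δ ^ ((3 * (n:ℝ) + 1) / 2)) ≤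
        volume {z | z ∈ polydisc n ∧ ‖f z - η‖ ≤ δ} := by
  obtain ⟨C, hC, ρ, hρ, hT⟩ := taylor_bound n f hsm ζ (fun j => (hζ j).le)
  have htan := tangential n f hsm hmap ζ hζ η hη hfζ
  generalize fderivWithin ℝ f (closedPolydisc n) ζ = L at hT htan
  obtain ⟨K, hK0, hK⟩ : ∃ K : ℝ, 0 ≤ K ∧ ∀ v, ‖L v‖ ≤ K * ‖v‖ := ⟨‖L‖, norm_nonneg _, L.le_opNorm⟩
  have hL1 : ∀ (r : ℝ) (hr : 0 ≤ r) (u : Fin n → ℂ), (∀ j, ‖u j‖ ≤ r) →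
      ‖L (fun j => ζ j * u j)‖ ≤ K * r := by
    intro r hr u hu
    refine (hK _).trans ?_
    gcongr
    rw [pi_norm_le_iff_of_nonneg hr]
    intro j
    rw [norm_mul, hζ j, one_mul]
    exact hu j
  obtain ⟨e, he0, he1, he2⟩ : ∃ e : ℝ, 0 < e ∧ e ≤ 1 / 2 ∧ e ^ 2 * (4 * C + 2 * K) ≤ 3 / 4 := by
    refine ⟨1 / (4 * C + 2 * K + 2), by positivity, ?_, ?_⟩
    · apply one_div_le_one_div_of_le <;> linarith
    · rw [div_pow, one_pow, div_mul_eq_mul_div, one_mul, div_le_div_iff₀ (by positivity) (by norm_num)]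
      nlinarith
  refine ⟨e ^ (3 * n) / (4 * K * e + 3), by positivity, min 1 (ρ ^ 2), by positivity, ?_⟩
  intro δ hδ hδ0
  obtain ⟨t, ht0, rfl⟩ : ∃ t : ℝ, 0 < t ∧ δ = t ^ 2 :=
    ⟨√δ, Real.sqrt_pos.2 hδ, (Real.sq_sqrt hδ.le).symm⟩
  have ht1 : t < 1 := by
    have := hδ0.trans_le (min_le_left _ _)
    nlinarith
  have htρ : t < ρ := lt_of_pow_lt_pow_left₀ 2 hρ.le (hδ0.trans_le (min_le_right _ _))
  have hpow : (t ^ 2) ^ ((3 * (n:ℝ) + 1) / 2) = t ^ (3 * n + 1) := by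
    rw [← Real.rpow_natCast t 2, ← Real.rpow_mul ht0.le, ← Real.rpow_natCast]
    congr 1
    push_cast
    ring
  rw [hpow]
  set Q : Set (Fin n → ℂ) := Set.pi univ
    (fun _ => Ioo (e ^ 2 * t ^ 2) (2 * (e ^ 2 * t ^ 2)) ×ℂ Ioo (-(e * t / 2)) (e * t / 2)) with hQ
  have hQvol : volume Q = ENNReal.ofReal ((e * t) ^ (3 * n)) := by
    rw [hQ, volume_pi_pi]
    simp only [volume_box, Finset.prod_const, Finset.card_univ, Fintype.card_fin]
    rw [← ENNReal.ofReal_mul (by nlinarith [sq_nonneg (e * t)]), ← ENNReal.ofReal_pow]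
    · congr 1
      rw [pow_mul]
      congr 1
      ring
    · have : 0 < e * t := by positivity
      have : 0 < e ^ 2 * t ^ 2 := by positivity
      apply mul_nonneg <;> linarith
  have hQmem : ∀ w ∈ Q, ∀ j, (e ^ 2 * t ^ 2 < (w j).re ∧ (w j).re < 2 * (e ^ 2 * t ^ 2)) ∧
      -(e * t / 2) < (w j).im ∧ (w j).im < e * t / 2 := by
    intro w hw j
    have := hw j (mem_univ j)
    rwa [Complex.mem_reProdIm] at this
  let T : (Fin n → ℝ) → ℂ := fun y => (starRingEnd ℂ) η * L (fun j => ζ j * (y j * Complex.I))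
  have hTnorm : ∀ y, ‖L (fun j => ζ j * (y j * Complex.I))‖ = |(T y).im| := by
    intro y
    have h1 : ‖T y‖ = ‖L (fun j => ζ j * (y j * Complex.I))‖ := by
      simp [T, hη]
    have h2 : T y = ((T y).im : ℂ) * Complex.I := by
      apply Complex.ext
      · have h0 : (T y).re = 0 := htan y
        simpa using h0
      · simp
    rw [← h1, h2]
    simp
  have hTsub : ∀ y y', T (fun j => y j - y' j) = T y - T y' := by
    intro y y'
    simp only [T]
    rw [← mul_sub, ← map_sub]
    congr 2
    ext j
    simp
    ring
  let ℓ : (Fin n → ℂ) → ℝ := fun w => (T (fun j => (w j).im)).im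
  have hℓ : ∀ w ∈ Q, |ℓ w| ≤ K * (e * t / 2) := by
    intro w hw
    simp only [ℓ]
    rw [← hTnorm]
    apply hL1 _ (by positivity)
    intro j
    have := hQmem w hw j
    simp only [norm_mul, Complex.norm_I, mul_one, Complex.norm_real, Real.norm_eq_abs]
    exact abs_le.2 ⟨this.2.1.le, this.2.2.le⟩
  obtain ⟨k, hk⟩ := pigeonhole_slab n Q (fun w => ⌊ℓ w / (t ^ 2 / 4)⌋) (⌈2 * K * e / t⌉₊) (by
    intro w hw
    have h1 := hℓ w hw
    have h3 := Nat.le_ceil (2 * K * e / t)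
    have h4 : |ℓ w / (t ^ 2 / 4)| ≤ 2 * K * e / t := by
      rw [abs_div, abs_of_pos (show 0 < t ^ 2 / 4 by positivity), div_le_iff₀ (by positivity)]
      refine h1.trans (le_of_eq ?_)
      field_simp
      ring
    have h5 := abs_le.1 (h4.trans h3)
    constructor
    · rw [Int.le_floor]; push_cast; exact h5.1
    · have : (⌊ℓ w / (t ^ 2 / 4)⌋ : ℝ) ≤ (⌈2 * K * e / t⌉₊ : ℝ) := (Int.floor_le _).trans h5.2
      exact_mod_cast this)
  set S := Q ∩ (fun w => ⌊ℓ w / (t ^ 2 / 4)⌋) ⁻¹' {k} with hS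
  have hM : ((2 * ⌈2 * K * e / t⌉₊ + 1 : ℕ) : ℝ≥0∞) ≤ ENNReal.ofReal ((4 * K * e + 3) / t) := by
    rw [← ENNReal.ofReal_natCast]
    apply ENNReal.ofReal_le_ofReal
    push_cast
    have h1 := (Nat.ceil_lt_add_one (show 0 ≤ 2 * K * e / t by positivity)).le
    have h2 : 1 ≤ 1 / t := by rw [le_div_iff₀ ht0]; linarith
    have h3 : (4 * K * e + 3) / t = 2 * (2 * K * e / t) + 3 * (1 / t) := by ring
    rw [h3]
    linarith
  have hSvol : ENNReal.ofReal (e ^ (3 * n) / (4 * K * e + 3) * t ^ (3 * n + 1)) ≤ volume S := by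
    have h1 : e ^ (3 * n) / (4 * K * e + 3) * t ^ (3 * n + 1)
        = t / (4 * K * e + 3) * (e * t) ^ (3 * n) := by
      rw [mul_pow]; ring
    rw [h1, ENNReal.ofReal_mul (by positivity), ← hQvol]
    calc _ ≤ ENNReal.ofReal (t / (4 * K * e + 3)) *
          (ENNReal.ofReal ((4 * K * e + 3) / t) * volume S) := by
            gcongr
            exact hk.trans (by gcongr)
      _ = volume S := by
        rw [← mul_assoc, ← ENNReal.ofReal_mul (by positivity), div_mul_div_cancel₀ (by positivity),
          div_self (by positivity)]
        simp
  obtain ⟨w0, hw0⟩ : S.Nonempty := by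
    apply nonempty_of_measure_ne_zero (μ := volume)
    refine (lt_of_lt_of_le ?_ hSvol).ne'
    rw [ENNReal.ofReal_pos]
    positivity
  refine hSvol.trans (le_trans (measure_mono ?_)
    (volume_affine n ζ hζ (fun j => 1 + (w0 j).im * Complex.I) _))
  intro w hw
  have hx := fun j => (hQmem w hw.1 j).1
  have hy : ∀ j, |(w j).im - (w0 j).im| ≤ e * t := by
    intro j
    have h1 := (hQmem w hw.1 j).2
    have h2 := (hQmem w0 hw0.1 j).2
    rw [abs_le]
    constructor <;> linarith
  have hkey : ∀ j, (w j).re ^ 2 + ((w j).im - (w0 j).im) ^ 2 < 2 * (w j).re := by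
    intro j
    have h1 := sq_le_sq' (abs_le.1 (hy j)).1 (abs_le.1 (hy j)).2
    have h2 := hx j
    have h3 : 0 < e ^ 2 * t ^ 2 := by positivity
    have h4 : (e * t) ^ 2 ≤ (1 / 2) ^ 2 := by
      have : e * t ≤ 1 / 2 := by nlinarith
      gcongr
    nlinarith
  set z : Fin n → ℂ := fun j => ζ j * (1 + (w0 j).im * Complex.I - w j) with hz
  have hzj : ∀ j, z j = ζ j * (1 - (((w j).re : ℂ) + (((w j).im - (w0 j).im : ℝ) : ℂ) * Complex.I)) := by
    intro j
    simp only [hz]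
    conv_lhs => rw [← Complex.re_add_im (w j)]
    push_cast
    ring
  have hzP : z ∈ polydisc n := by
    intro j
    rw [hzj]
    exact mem_unit (hζ j) _ _ (hkey j)
  show z ∈ polydisc n ∧ ‖f z - η‖ ≤ t ^ 2
  refine ⟨hzP, ?_⟩
  have hdist : ‖z - ζ‖ ≤ 2 * (e * t) := by
    rw [pi_norm_le_iff_of_nonneg (by positivity)]
    intro j
    have : (z - ζ) j = ζ j * (-(((w j).re : ℂ) + (((w j).im - (w0 j).im : ℝ) : ℂ) * Complex.I)) := by
      rw [Pi.sub_apply, hzj]; ring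
    rw [this, norm_mul, hζ j, one_mul, norm_neg]
    apply le_of_sq_le_sq _ (by positivity)
    rw [← Complex.normSq_eq_norm_sq, Complex.normSq_add_mul_I]
    have := hkey j
    have := (hx j).2
    nlinarith
  have hTz := hT z (fun j => (hzP j).le) (by nlinarith)
  have hsplit : z - ζ = (fun j => ζ j * (-((w j).re : ℂ))) -
      (fun j => ζ j * ((((w j).im - (w0 j).im : ℝ) : ℂ) * Complex.I)) := by
    ext j
    simp only [Pi.sub_apply]
    rw [hzj]; ring
  have hLx : ‖L (fun j => ζ j * (-((w j).re : ℂ)))‖ ≤ K * (2 * (e ^ 2 * t ^ 2)) := by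
    apply hL1 _ (by positivity)
    intro j
    have h3 : 0 < e ^ 2 * t ^ 2 := by positivity
    have := hx j
    rw [norm_neg, Complex.norm_real, Real.norm_eq_abs, abs_le]
    constructor <;> linarith
  have hLy : ‖L (fun j => ζ j * ((((w j).im - (w0 j).im : ℝ) : ℂ) * Complex.I))‖ ≤ t ^ 2 / 4 := by
    rw [hTnorm (fun j => (w j).im - (w0 j).im), hTsub]
    have h1 : ⌊ℓ w / (t ^ 2 / 4)⌋ = k := hw.2
    have h2 : ⌊ℓ w0 / (t ^ 2 / 4)⌋ = k := hw0.2
    have h3 := Int.abs_sub_lt_one_of_floor_eq_floor (h1.trans h2.symm)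
    rw [← sub_div, abs_div, abs_of_pos (show 0 < t ^ 2 / 4 by positivity),
      div_lt_one (by positivity)] at h3
    exact h3.le
  have hfin : f z - η = (f z - f ζ - L (z - ζ)) + (L (fun j => ζ j * (-((w j).re : ℂ))) -
      L (fun j => ζ j * ((((w j).im - (w0 j).im : ℝ) : ℂ) * Complex.I))) := by
    rw [← map_sub, ← hsplit, hfζ]; ring
  rw [hfin]
  have hsq : C * ‖z - ζ‖ ^ 2 ≤ C * (2 * (e * t)) ^ 2 := by gcongr
  have hlast := mul_le_mul_of_nonneg_right he2 (sq_nonneg t)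
  calc _ ≤ _ := norm_add_le _ _
    _ ≤ _ := add_le_add_right (norm_sub_le _ _) _
    _ ≤ C * (2 * (e * t)) ^ 2 + (K * (2 * (e ^ 2 * t ^ 2)) + t ^ 2 / 4) :=
      add_le_add (hTz.trans hsq) (add_le_add hLx hLy)
    _ ≤ t ^ 2 := by nlinarith

end
end

section
/- Let α_1,…,α_n ∈ ℂ with Σ_j |α_j| = 1 and α_j ≠ 0 for all j, let g : 𝔻ⁿ → 𝔻 be given by g(z) = α_1 z_1ⁿ + … + α_n z_nⁿ, and let β > -1. Then for every η ∈ 𝕋 there exist constants c, C > 0 such that for all sufficiently small δ > 0: c·δ^{n(β+1)+(n+1)/2} ≤ V_β({z ∈ 𝔻ⁿ : |g(z) - η| ≤ δ}) ≤ C·δ^{n(β+1)+(n+1)/2}. -/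
open MeasureTheory Metric Set ENNReal

noncomputable section

/-- The weighted Bergman measure `V_β` on the polydisc: the product of the measures
`dA_β(z) = (β+1)(1-|z|²)^β dA(z)`, where `dA` is normalized area measure on the unit disc. -/
def Vbeta (n : ℕ) (β : ℝ) : Measure (Fin n → ℂ) :=
  (volume.restrict (polydisc n)).withDensity
    (fun z => ENNReal.ofReal (∏ j, ((β + 1) * (1 - ‖z j‖ ^ 2) ^ β / Real.pi)))

/-- One-dimensional factor. -/
def muB (β : ℝ) : Measure ℂ :=
  (volume.restrict (ball (0:ℂ) 1)).withDensity
    (fun z => ENNReal.ofReal ((β + 1) * (1 - ‖z‖ ^ 2) ^ β / Real.pi))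

instance (β : ℝ) : SigmaFinite (muB β) := by unfold muB; infer_instance

lemma lintegral_pi_prod {X : Type*} [MeasurableSpace X] (μ : Measure X) [SigmaFinite μ] (n : ℕ)
    (f : Fin n → X → ℝ≥0∞) (hf : ∀ i, Measurable (f i)) :
    ∫⁻ z, ∏ j, f j (z j) ∂(Measure.pi (fun _ : Fin n => μ)) = ∏ j, ∫⁻ x, f j x ∂μ := by
  induction n with
  | zero => simp
  | succ m ih =>
    have h := (measurePreserving_piFinSuccAbove (fun _ : Fin (m+1) => μ) 0).symm
    rw [← h.lintegral_comp_emb (MeasurableEquiv.measurableEmbedding _)]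
    have hm : Measurable (fun x : X × (Fin m → X) => f 0 x.1 * ∏ j, f (Fin.succ j) (x.2 j)) := by
      have := hf
      fun_prop
    have e : ∀ x : X × (Fin m → X), ∏ j, f j ((MeasurableEquiv.piFinSuccAbove (fun _ : Fin (m+1) => X) 0).symm x j)
        = f 0 x.1 * ∏ j, f (Fin.succ j) (x.2 j) := by
      intro x
      rw [Fin.prod_univ_succ]
      simp [MeasurableEquiv.piFinSuccAbove, Fin.insertNthEquiv]
    simp_rw [e]
    rw [lintegral_prod _ hm.aemeasurable, Fin.prod_univ_succ, ← ih _ (fun i => hf i.succ)]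
    simp only
    rw [← lintegral_mul_const'' _ (hf 0).aemeasurable]
    refine lintegral_congr fun x => ?_
    rw [lintegral_const_mul]
    have := hf
    fun_prop

lemma Vbeta_eq_pi (n : ℕ) (β : ℝ) (hβ : -1 < β) :
    Vbeta n β = Measure.pi (fun _ : Fin n => muB β) := by
  symm
  apply Measure.pi_eq
  intro s hs
  have hp : polydisc n = Set.pi univ (fun _ => ball (0:ℂ) 1) := by
    ext z; simp [polydisc]
  have hms : MeasurableSet (Set.pi univ s) := MeasurableSet.univ_pi hs
  have hmb : MeasurableSet (Set.pi univ (fun _ : Fin n => ball (0:ℂ) 1)) :=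
    MeasurableSet.univ_pi (fun _ => measurableSet_ball)
  unfold Vbeta muB
  rw [withDensity_apply _ hms, Measure.restrict_restrict hms, hp, ← Set.pi_inter_distrib,
    volume_pi, Measure.restrict_pi_pi]
  simp_rw [withDensity_apply _ (hs _), Measure.restrict_restrict (hs _)]
  have key := lintegral_pi_prod (volume : Measure ℂ) n
    (fun j x => (s j ∩ ball (0:ℂ) 1).indicator (fun z => ENNReal.ofReal ((β + 1) * (1 - ‖z‖ ^ 2) ^ β / Real.pi)) x)
    (fun j => Measurable.indicator (by fun_prop) ((hs j).inter measurableSet_ball))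
  simp_rw [lintegral_indicator ((hs _).inter measurableSet_ball)] at key
  rw [← key, ← Measure.restrict_pi_pi, ← lintegral_indicator]
  · refine lintegral_congr fun z => ?_
    by_cases hz : z ∈ Set.pi univ (fun i => s i ∩ ball (0:ℂ) 1)
    · rw [indicator_of_mem hz, ENNReal.ofReal_prod_of_nonneg]
      · refine Finset.prod_congr rfl fun j _ => ?_
        rw [indicator_of_mem (hz j (mem_univ _))]
      · intro j _
        have h1 := (hz j (mem_univ _)).2
        have h2 : ‖z j‖ < 1 := by simpa using h1
        have h3 : 0 ≤ 1 - ‖z j‖^2 := by nlinarith [norm_nonneg (z j)]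
        have h4 : 0 < β + 1 := by linarith
        have := Real.pi_pos
        have := Real.rpow_nonneg h3 β
        positivity
    · rw [indicator_of_notMem hz]
      simp only [Set.mem_pi, mem_univ, true_imp_iff, not_forall] at hz
      obtain ⟨j, hj⟩ := hz
      symm
      apply Finset.prod_eq_zero (Finset.mem_univ j)
      rw [indicator_of_notMem hj]
  · exact MeasurableSet.univ_pi fun i => (hs i).inter measurableSet_ball

lemma pi_slice {X : Type*} [MeasurableSpace X] (μ : Measure X) [SigmaFinite μ] (m : ℕ)
    (S : Set (Fin (m+1) → X)) (hS : MeasurableSet S) :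
    Measure.pi (fun _ : Fin (m+1) => μ) S =
      ∫⁻ z, μ {x | (Fin.cons x z : Fin (m+1) → X) ∈ S} ∂(Measure.pi (fun _ : Fin m => μ)) := by
  have h := (measurePreserving_piFinSuccAbove (fun _ : Fin (m+1) => μ) 0).symm
  rw [← h.measure_preimage hS.nullMeasurableSet, Measure.prod_apply_symm (h.measurable hS)]
  refine lintegral_congr fun z => ?_
  congr 1
  ext x
  simp [MeasurableEquiv.piFinSuccAbove, Fin.insertNthEquiv]

lemma pi_upper {X : Type*} [MeasurableSpace X] (μ : Measure X) [SigmaFinite μ] (m : ℕ)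
    (S : Set (Fin (m+1) → X)) (hS : MeasurableSet S) (E : Fin m → Set X)
    (hE : ∀ j, MeasurableSet (E j)) (A : ℝ≥0∞)
    (h1 : ∀ z ∈ S, ∀ j, z (Fin.succ j) ∈ E j)
    (h2 : ∀ z : Fin m → X, μ {x | (Fin.cons x z : Fin (m+1) → X) ∈ S} ≤ A) :
    Measure.pi (fun _ : Fin (m+1) => μ) S ≤ A * ∏ j, μ (E j) := by
  rw [pi_slice μ m S hS, ← Measure.pi_pi, ← lintegral_indicator_const (MeasurableSet.univ_pi hE)]
  refine lintegral_mono fun z => ?_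
  by_cases hz : z ∈ Set.pi univ E
  · rw [indicator_of_mem hz]; exact h2 z
  · rw [indicator_of_notMem hz]
    have : {x | (Fin.cons x z : Fin (m+1) → X) ∈ S} = ∅ := by
      ext x
      simp only [mem_ofPred_eq, mem_empty_iff_false, iff_false]
      intro hx
      exact hz fun j _ => by simpa using h1 _ hx j
    rw [this]; simp

lemma pi_lower {X : Type*} [MeasurableSpace X] (μ : Measure X) [SigmaFinite μ] (m : ℕ)
    (S : Set (Fin (m+1) → X)) (hS : MeasurableSet S) (E : Fin m → Set X)
    (hE : ∀ j, MeasurableSet (E j)) (A : ℝ≥0∞)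
    (h2 : ∀ z : Fin m → X, (∀ j, z j ∈ E j) → A ≤ μ {x | (Fin.cons x z : Fin (m+1) → X) ∈ S}) :
    A * ∏ j, μ (E j) ≤ Measure.pi (fun _ : Fin (m+1) => μ) S := by
  rw [pi_slice μ m S hS, ← Measure.pi_pi, ← lintegral_indicator_const (MeasurableSet.univ_pi hE)]
  refine lintegral_mono fun z => ?_
  by_cases hz : z ∈ Set.pi univ E
  · rw [indicator_of_mem hz]; exact h2 z fun j => hz j (mem_univ _)
  · rw [indicator_of_notMem hz]; exact zero_le

lemma muB_polar (β : ℝ) (A : Set ℂ) (hA : MeasurableSet A) :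
    muB β A = ∫⁻ r in Ioo (0:ℝ) 1, ENNReal.ofReal (r * ((β + 1) * (1 - r ^ 2) ^ β / Real.pi)) *
      volume {θ : ℝ | θ ∈ Ioo (-Real.pi) Real.pi ∧ (r:ℂ) * Complex.exp (θ * Complex.I) ∈ A} := by
  unfold muB
  rw [withDensity_apply _ hA, Measure.restrict_restrict hA,
    ← lintegral_indicator (hA.inter measurableSet_ball), ← Complex.lintegral_comp_polarCoord_symm,
    show polarCoord.target = Ioi (0:ℝ) ×ˢ Ioo (-Real.pi) Real.pi from rfl,
    Measure.volume_eq_prod, ← Measure.prod_restrict]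
  have hAm : MeasurableSet {p : ℝ × ℝ | (p.1:ℂ) * Complex.exp (p.2 * Complex.I) ∈ A} :=
    hA.preimage (by fun_prop)
  have hms : ∀ r : ℝ, MeasurableSet {θ : ℝ | (r:ℂ) * Complex.exp (θ * Complex.I) ∈ A} := fun r =>
    hA.preimage (by fun_prop)
  have hgm : Measurable (fun p : ℝ × ℝ => ENNReal.ofReal p.1 * ((A ∩ ball (0:ℂ) 1).indicator
      (fun z => ENNReal.ofReal ((β + 1) * (1 - ‖z‖ ^ 2) ^ β / Real.pi)) (Complex.polarCoord.symm p))) := by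
    apply Measurable.mul (by fun_prop)
    apply Measurable.comp (g := (A ∩ ball (0:ℂ) 1).indicator
      (fun z => ENNReal.ofReal ((β + 1) * (1 - ‖z‖ ^ 2) ^ β / Real.pi)))
    · exact Measurable.indicator (by fun_prop) (hA.inter measurableSet_ball)
    · have : (fun p : ℝ × ℝ => Complex.polarCoord.symm p) =
        fun p => (p.1:ℂ) * (Real.cos p.2 + Real.sin p.2 * Complex.I) := by
        ext p; simp
      show Measurable (fun p : ℝ × ℝ => Complex.polarCoord.symm p)
      rw [this]; fun_prop
  simp only [smul_eq_mul]
  rw [lintegral_prod _ hgm.aemeasurable]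
  rw [← lintegral_indicator measurableSet_Ioi, ← lintegral_indicator measurableSet_Ioo]
  refine lintegral_congr fun r => ?_
  by_cases hr0 : 0 < r
  swap
  · rw [indicator_of_notMem (by simpa using hr0), indicator_of_notMem (by simp [hr0])]
  rw [indicator_of_mem (by simpa using hr0)]
  by_cases hr1 : r < 1
  swap
  · rw [indicator_of_notMem (by simp [hr1])]
    refine (lintegral_congr fun θ => ?_).trans lintegral_zero
    simp only [mul_eq_zero]
    right
    apply indicator_of_notMem
    rintro ⟨_, h⟩
    rw [mem_ball_zero_iff, Complex.norm_polarCoord_symm] at h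
    exact hr1 ((le_abs_self r).trans_lt h)
  rw [indicator_of_mem (show r ∈ Ioo (0:ℝ) 1 from ⟨hr0, hr1⟩)]
  have e : ∀ θ : ℝ, ENNReal.ofReal r * ((A ∩ ball (0:ℂ) 1).indicator
      (fun z => ENNReal.ofReal ((β + 1) * (1 - ‖z‖ ^ 2) ^ β / Real.pi)) (Complex.polarCoord.symm (r, θ)))
      = {θ : ℝ | (r:ℂ) * Complex.exp (θ * Complex.I) ∈ A}.indicator
        (fun _ => ENNReal.ofReal (r * ((β + 1) * (1 - r ^ 2) ^ β / Real.pi))) θ := by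
    intro θ
    have hn : ‖Complex.polarCoord.symm (r, θ)‖ = r := by
      rw [Complex.norm_polarCoord_symm]; exact abs_of_pos hr0
    have he : Complex.polarCoord.symm (r, θ) = (r:ℂ) * Complex.exp (θ * Complex.I) := by
      rw [Complex.polarCoord_symm_apply, Complex.exp_mul_I]; simp
    by_cases hA' : (r:ℂ) * Complex.exp (θ * Complex.I) ∈ A
    · rw [indicator_of_mem, indicator_of_mem (show θ ∈ {θ : ℝ | (r:ℂ) * Complex.exp (θ * Complex.I) ∈ A} from hA'), hn, ENNReal.ofReal_mul hr0.le]
      exact ⟨he ▸ hA', by rw [mem_ball_zero_iff, hn]; exact hr1⟩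
    · rw [indicator_of_notMem, indicator_of_notMem (show θ ∉ {θ : ℝ | (r:ℂ) * Complex.exp (θ * Complex.I) ∈ A} from hA'), mul_zero]
      rintro ⟨h, _⟩
      exact hA' (he ▸ h)
  simp_rw [e]
  rw [lintegral_indicator_const (hms r), Measure.restrict_apply (hms r)]
  congr 2
  ext θ
  simp [and_comm]

lemma radial (β : ℝ) (hβ : -1 < β) (t : ℝ) (ht : 0 < t) (ht1 : t < 1) :
    ∫⁻ r in Ioo (1 - t) 1, ENNReal.ofReal (r * ((β + 1) * (1 - r ^ 2) ^ β / Real.pi)) =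
      ENNReal.ofReal ((1 - (1 - t) ^ 2) ^ (β + 1) / (2 * Real.pi)) := by
  have hπ := Real.pi_pos
  have hb : 0 < β + 1 := by linarith
  set F : ℝ → ℝ := fun r => - ((1 - r ^ 2) ^ (β + 1) / (2 * Real.pi)) with hF
  have hc : ContinuousOn F (Icc (1 - t) 1) := by
    apply Continuous.continuousOn
    apply Continuous.neg
    apply Continuous.div_const
    exact Continuous.rpow_const (by fun_prop) (fun _ => Or.inr hb.le)
  have hd : ∀ r ∈ Ioo (1 - t) 1, HasDerivAt F (r * ((β + 1) * (1 - r ^ 2) ^ β / Real.pi)) r := by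
    intro r hr
    have h1 : 1 - r ^ 2 ≠ 0 := by nlinarith [hr.1, hr.2]
    have h2 : HasDerivAt (fun r : ℝ => 1 - r ^ 2) (- (2 * r)) r := by
      simpa using (hasDerivAt_pow 2 r).const_sub 1
    have h3 := ((h2.rpow_const (p := β + 1) (Or.inl h1)).div_const (2 * Real.pi)).neg
    have h4 : r * ((β + 1) * (1 - r ^ 2) ^ β / Real.pi) =
        -(-(2 * r) * (β + 1) * (1 - r ^ 2) ^ (β + 1 - 1) / (2 * Real.pi)) := by
      rw [show β + 1 - 1 = β by ring]
      field_simp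
    rw [h4]
    exact h3
  have hp : ∀ r ∈ Ioo (1 - t) 1, 0 ≤ (r * ((β + 1) * (1 - r ^ 2) ^ β / Real.pi)) := by
    intro r hr
    have h0 : 0 ≤ r := by linarith [hr.1]
    have h1 : 0 ≤ 1 - r ^ 2 := by nlinarith [hr.1, hr.2]
    have := Real.rpow_nonneg h1 β
    positivity
  have hi := intervalIntegral.integrableOn_deriv_of_nonneg hc hd hp
  have hI := intervalIntegral.integral_eq_sub_of_hasDerivAt_of_le (by linarith) hc hd
    ((intervalIntegrable_iff_integrableOn_Ioc_of_le (by linarith)).2 hi)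
  rw [intervalIntegral.integral_of_le (by linarith), integral_Ioc_eq_integral_Ioo] at hI
  rw [← ofReal_integral_eq_lintegral_ofReal, hI]
  · congr 1
    simp [hF, Real.zero_rpow hb.ne']
  · exact hi.mono_set Ioo_subset_Ioc_self
  · exact (ae_restrict_iff' measurableSet_Ioo).2 (Filter.Eventually.of_forall hp)

lemma angle_upper (n : ℕ) (hn : 0 < n) (ζ : ℂ) (r ε : ℝ) (hr : 1 / 2 ≤ r) (hε : 0 < ε) :
    volume {θ : ℝ | θ ∈ Ioo (-Real.pi) Real.pi ∧
      ‖((r:ℂ) * Complex.exp (θ * Complex.I)) ^ n - ζ‖ ≤ ε} ≤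
      ENNReal.ofReal (2 * n * Real.pi * 2 ^ n * ε) := by
  have hπ := Real.pi_pos
  have hn' : (0:ℝ) < n := by exact_mod_cast hn
  have hn1 : (1:ℝ) ≤ n := by exact_mod_cast hn
  set T := {θ : ℝ | θ ∈ Ioo (-Real.pi) Real.pi ∧
      ‖((r:ℂ) * Complex.exp (θ * Complex.I)) ^ n - ζ‖ ≤ ε} with hT
  set I : ℕ → Set ℝ := fun k => Icc (-Real.pi + k * (Real.pi / n)) (-Real.pi + (k + 1) * (Real.pi / n))
  have hcov : T ⊆ ⋃ k ∈ Finset.range (2 * n), T ∩ I k := by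
    intro θ hθ
    have h1 : 0 ≤ (θ + Real.pi) * n / Real.pi := by
      have := hθ.1.1
      have : 0 ≤ θ + Real.pi := by linarith
      positivity
    simp only [mem_iUnion, Finset.mem_range]
    refine ⟨⌊(θ + Real.pi) * n / Real.pi⌋₊, ?_, hθ, ?_, ?_⟩
    · rw [Nat.floor_lt h1]
      push_cast
      rw [div_lt_iff₀ hπ]
      nlinarith [hθ.1.2]
    · have := Nat.floor_le h1
      have h2 : (⌊(θ + Real.pi) * n / Real.pi⌋₊ : ℝ) * (Real.pi / n) ≤ (θ + Real.pi) * n / Real.pi * (Real.pi / n) := by gcongr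
      have h3 : (θ + Real.pi) * n / Real.pi * (Real.pi / n) = θ + Real.pi := by field_simp
      linarith
    · have := (Nat.lt_floor_add_one ((θ + Real.pi) * n / Real.pi)).le
      have h2 : (θ + Real.pi) * n / Real.pi * (Real.pi / n) ≤ (⌊(θ + Real.pi) * n / Real.pi⌋₊ + 1 : ℝ) * (Real.pi / n) := by gcongr
      have h3 : (θ + Real.pi) * n / Real.pi * (Real.pi / n) = θ + Real.pi := by field_simp
      linarith
  have hdiam : ∀ k, volume (T ∩ I k) ≤ ENNReal.ofReal (Real.pi * 2 ^ n * ε) := by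
    intro k
    refine (Real.volume_le_diam _).trans (Metric.ediam_le ?_)
    rintro x ⟨hx, hxI⟩ y ⟨hy, hyI⟩
    rw [edist_dist]
    apply ENNReal.ofReal_le_ofReal
    rw [Real.dist_eq]
    have h1 : |x - y| ≤ Real.pi / n := by
      rw [abs_le]; constructor <;> linarith [hxI.1, hxI.2, hyI.1, hyI.2]
    have h2 : ‖((r:ℂ) * Complex.exp (x * Complex.I)) ^ n - ((r:ℂ) * Complex.exp (y * Complex.I)) ^ n‖ ≤ 2 * ε := by
      have := norm_sub_le_norm_sub_add_norm_sub (((r:ℂ) * Complex.exp (x * Complex.I)) ^ n) ζ (((r:ℂ) * Complex.exp (y * Complex.I)) ^ n)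
      rw [norm_sub_rev ζ] at this
      linarith [hx.2, hy.2]
    have h3 : ((r:ℂ) * Complex.exp (x * Complex.I)) ^ n - ((r:ℂ) * Complex.exp (y * Complex.I)) ^ n
        = (r:ℂ) ^ n * (Complex.exp (y * Complex.I)) ^ n * (Complex.exp (Complex.I * ((n * (x - y) : ℝ) : ℂ)) - 1) := by
      have : Complex.exp (Complex.I * ((n * (x - y) : ℝ) : ℂ)) * (Complex.exp (y * Complex.I)) ^ n = (Complex.exp (x * Complex.I)) ^ n := by
        rw [← Complex.exp_nat_mul, ← Complex.exp_nat_mul, ← Complex.exp_add]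
        congr 1
        push_cast
        ring
      rw [mul_pow, mul_pow, ← this]; ring
    have hr0 : 0 < r := by linarith
    rw [h3, norm_mul, norm_mul, norm_pow, norm_pow, Complex.norm_exp_ofReal_mul_I,
      Complex.norm_exp_I_mul_ofReal_sub_one, Complex.norm_real, Real.norm_of_nonneg hr0.le, one_pow,
      mul_one, Real.norm_eq_abs, abs_mul, abs_two] at h2
    have h4 : |n * (x - y) / 2| ≤ Real.pi / 2 := by
      rw [abs_div, abs_mul, abs_two, abs_of_pos hn']
      rw [le_div_iff₀ hn'] at h1
      linarith
    have h5 := Real.mul_abs_le_abs_sin h4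
    have h6 : (1/2:ℝ) ^ n ≤ r ^ n := by gcongr
    have h7 : |n * (x - y) / 2| = n * |x - y| / 2 := by
      rw [abs_div, abs_mul, abs_two, abs_of_pos hn']
    rw [h7] at h5
    have h8 : (1/2:ℝ) ^ n * (2 * (2 / Real.pi * (n * |x - y| / 2))) ≤ 2 * ε := by
      refine le_trans ?_ h2
      gcongr
    have h9 : (1/2:ℝ) ^ n * (2 * (2 / Real.pi * (n * |x - y| / 2))) = 2 * (n * |x - y|) / (Real.pi * 2 ^ n) := by
      rw [div_pow, one_pow]; field_simp
    rw [h9, div_le_iff₀ (by positivity)] at h8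
    nlinarith [abs_nonneg (x - y)]
  calc volume T ≤ volume (⋃ k ∈ Finset.range (2 * n), T ∩ I k) := measure_mono hcov
    _ ≤ ∑ k ∈ Finset.range (2 * n), volume (T ∩ I k) := measure_biUnion_finset_le _ _
    _ ≤ ∑ k ∈ Finset.range (2 * n), ENNReal.ofReal (Real.pi * 2 ^ n * ε) := Finset.sum_le_sum fun k _ => hdiam k
    _ = ENNReal.ofReal (2 * n * Real.pi * 2 ^ n * ε) := by
      rw [Finset.sum_const, Finset.card_range, nsmul_eq_mul, ← ENNReal.ofReal_natCast,
        ← ENNReal.ofReal_mul (by positivity)]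
      congr 1; push_cast; ring

lemma angle_lower (u : ℂ) (hu : ‖u‖ = 1) (r ε : ℝ) (hr1 : r < 1) (hr : 1 - ε / 2 ≤ r) (hε : 0 < ε)
    (hε1 : ε ≤ 1) :
    ENNReal.ofReal (ε / 2) ≤ volume {θ : ℝ | θ ∈ Ioo (-Real.pi) Real.pi ∧
      ‖(r:ℂ) * Complex.exp (θ * Complex.I) - u‖ ≤ ε} := by
  have hπ := Real.pi_gt_three
  set φ := Complex.arg u
  have hφ1 : -Real.pi < φ := Complex.neg_pi_lt_arg u
  have hφ2 : φ ≤ Real.pi := Complex.arg_le_pi u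
  have hu' : u = Complex.exp (φ * Complex.I) := by
    have := Complex.norm_mul_exp_arg_mul_I u
    rw [hu] at this
    simpa using this.symm
  have key : ∀ θ : ℝ, |θ - φ| ≤ ε / 2 → ‖(r:ℂ) * Complex.exp (θ * Complex.I) - u‖ ≤ ε := by
    intro θ hθ
    have : (r:ℂ) * Complex.exp (θ * Complex.I) - u = ((r - 1 : ℝ):ℂ) * Complex.exp (θ * Complex.I) +
        Complex.exp (φ * Complex.I) * (Complex.exp (Complex.I * ((θ - φ : ℝ) : ℂ)) - 1) := by
      have : Complex.exp (φ * Complex.I) * Complex.exp (Complex.I * ((θ - φ : ℝ) : ℂ)) = Complex.exp (θ * Complex.I) := by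
        rw [← Complex.exp_add]; congr 1; push_cast; ring
      rw [mul_sub, this, hu']; push_cast; ring
    rw [this]
    refine (norm_add_le _ _).trans ?_
    rw [norm_mul, norm_mul, Complex.norm_exp_ofReal_mul_I, Complex.norm_exp_ofReal_mul_I,
      Complex.norm_real, Real.norm_eq_abs, abs_of_neg (by linarith)]
    have := Real.norm_exp_I_mul_ofReal_sub_one_le (x := θ - φ)
    rw [Real.norm_eq_abs] at this
    linarith
  rcases le_or_gt φ 0 with h | h
  · calc ENNReal.ofReal (ε / 2) = volume (Ioo φ (φ + ε / 2)) := by rw [Real.volume_Ioo]; congr 1; ring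
      _ ≤ _ := by
        refine measure_mono fun θ hθ => ⟨⟨by linarith [hθ.1], by linarith [hθ.2]⟩, key θ ?_⟩
        rw [abs_le]; constructor <;> linarith [hθ.1, hθ.2]
  · calc ENNReal.ofReal (ε / 2) = volume (Ioo (φ - ε / 2) φ) := by rw [Real.volume_Ioo]; congr 1; ring
      _ ≤ _ := by
        refine measure_mono fun θ hθ => ⟨⟨by linarith [hθ.1], by linarith [hθ.2]⟩, key θ ?_⟩
        rw [abs_le]; constructor <;> linarith [hθ.1, hθ.2]

lemma measUp (n : ℕ) (ζ : ℂ) (t ε : ℝ) :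
    MeasurableSet {z : ℂ | 1 - t ≤ ‖z‖ ∧ ‖z ^ n - ζ‖ ≤ ε} :=
  (measurableSet_le (f := fun _ : ℂ => 1 - t) (g := fun z : ℂ => ‖z‖) (by fun_prop) (by fun_prop)).inter
    (measurableSet_le (f := fun z : ℂ => ‖z ^ n - ζ‖) (g := fun _ : ℂ => ε) (by fun_prop) (by fun_prop))

lemma muB_upper (n : ℕ) (hn : 0 < n) (β : ℝ) (hβ : -1 < β) :
    ∃ K > (0:ℝ), ∀ (ζ : ℂ) (t ε : ℝ), 0 < t → t ≤ 1 / 2 → 0 < ε →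
      muB β {z | 1 - t ≤ ‖z‖ ∧ ‖z ^ n - ζ‖ ≤ ε} ≤ ENNReal.ofReal (K * t ^ (β + 1) * ε) := by
  have hπ := Real.pi_pos
  have hn' : (0:ℝ) < n := by exact_mod_cast hn
  refine ⟨2 ^ (β + 1) / (2 * Real.pi) * (2 * n * Real.pi * 2 ^ n), by positivity, ?_⟩
  intro ζ t ε ht ht2 hε
  have hm := measUp n ζ t ε
  have hsub : Ioo (1 - t) 1 ⊆ Ioo (0:ℝ) 1 := fun r hr => ⟨by linarith [hr.1], hr.2⟩
  calc muB β {z | 1 - t ≤ ‖z‖ ∧ ‖z ^ n - ζ‖ ≤ ε}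
      ≤ ∫⁻ r in Ico (1 - t) 1, ENNReal.ofReal (r * ((β + 1) * (1 - r ^ 2) ^ β / Real.pi)) *
        ENNReal.ofReal (2 * n * Real.pi * 2 ^ n * ε) := by
        rw [muB_polar β _ hm, ← lintegral_indicator measurableSet_Ioo, ← lintegral_indicator measurableSet_Ico]
        refine lintegral_mono fun r => ?_
        by_cases hr : r ∈ Ico (1 - t) 1
        · have h1 : r ∈ Ioo (0:ℝ) 1 := ⟨by linarith [hr.1], hr.2⟩
          rw [indicator_of_mem hr, indicator_of_mem h1]
          gcongr
          refine le_trans (measure_mono ?_) (angle_upper n hn ζ r ε (by linarith [hr.1]) hε)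
          rintro θ ⟨h1, h2, h3⟩
          exact ⟨h1, h3⟩
        · rw [indicator_of_notMem hr]
          by_cases h1 : r ∈ Ioo (0:ℝ) 1
          · rw [indicator_of_mem h1]
            have : {θ : ℝ | θ ∈ Ioo (-Real.pi) Real.pi ∧ (r:ℂ) * Complex.exp (θ * Complex.I) ∈ {z : ℂ | 1 - t ≤ ‖z‖ ∧ ‖z ^ n - ζ‖ ≤ ε}} = ∅ := by
              refine eq_empty_of_forall_notMem ?_
              rintro θ ⟨_, h2, _⟩
              rw [norm_mul, Complex.norm_exp_ofReal_mul_I, Complex.norm_real, Real.norm_of_nonneg h1.1.le, mul_one] at h2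
              exact hr ⟨h2, h1.2⟩
            rw [this]; simp
          · rw [indicator_of_notMem h1]
    _ = ENNReal.ofReal ((1 - (1 - t) ^ 2) ^ (β + 1) / (2 * Real.pi)) * ENNReal.ofReal (2 * n * Real.pi * 2 ^ n * ε) := by
        rw [lintegral_mul_const _ (by fun_prop), ← restrict_Ioo_eq_restrict_Ico, radial β hβ t ht (by linarith)]
    _ ≤ _ := by
        have h0 : 0 ≤ 1 - (1 - t) ^ 2 := by nlinarith
        have hb : 0 ≤ β + 1 := by linarith
        rw [← ENNReal.ofReal_mul (by have := Real.rpow_nonneg h0 (β + 1); positivity)]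
        apply ENNReal.ofReal_le_ofReal
        have : (1 - (1 - t) ^ 2) ^ (β + 1) ≤ 2 ^ (β + 1) * t ^ (β + 1) := by
          rw [← Real.mul_rpow (by norm_num) ht.le]
          apply Real.rpow_le_rpow h0 _ hb
          nlinarith
        calc _ ≤ (2 ^ (β + 1) * t ^ (β + 1)) / (2 * Real.pi) * (2 * n * Real.pi * 2 ^ n * ε) := by gcongr
          _ = _ := by ring

lemma measLow (u : ℂ) (t ε : ℝ) :
    MeasurableSet {z : ℂ | ‖z‖ < 1 ∧ 1 - t ≤ ‖z‖ ∧ ‖z - u‖ ≤ ε} :=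
  (measurableSet_lt (f := fun z : ℂ => ‖z‖) (g := fun _ : ℂ => (1:ℝ)) (by fun_prop) (by fun_prop)).inter
    ((measurableSet_le (f := fun _ : ℂ => 1 - t) (g := fun z : ℂ => ‖z‖) (by fun_prop) (by fun_prop)).inter
      (measurableSet_le (f := fun z : ℂ => ‖z - u‖) (g := fun _ : ℂ => ε) (by fun_prop) (by fun_prop)))

lemma muB_lower (β : ℝ) (hβ : -1 < β) :
    ∃ k > (0:ℝ), ∀ (u : ℂ) (t ε : ℝ), ‖u‖ = 1 → 0 < t → t ≤ ε → ε ≤ 1 →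
      ENNReal.ofReal (k * t ^ (β + 1) * ε) ≤ muB β {z | ‖z‖ < 1 ∧ 1 - t ≤ ‖z‖ ∧ ‖z - u‖ ≤ ε} := by
  have hπ := Real.pi_pos
  refine ⟨(1 / 2) ^ (β + 1) / (2 * Real.pi) * (1 / 2), by positivity, ?_⟩
  intro u t ε hu ht hte hε1
  have hε : 0 < ε := by linarith
  have hm : MeasurableSet {z : ℂ | ‖z‖ < 1 ∧ 1 - t ≤ ‖z‖ ∧ ‖z - u‖ ≤ ε} :=
    measLow u t ε
  calc ENNReal.ofReal ((1 / 2) ^ (β + 1) / (2 * Real.pi) * (1 / 2) * t ^ (β + 1) * ε)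
      ≤ ENNReal.ofReal ((1 - (1 - t / 2) ^ 2) ^ (β + 1) / (2 * Real.pi)) * ENNReal.ofReal (ε / 2) := by
        have h0 : 0 ≤ 1 - (1 - t / 2) ^ 2 := by nlinarith
        have hb : 0 ≤ β + 1 := by linarith
        rw [← ENNReal.ofReal_mul (by have := Real.rpow_nonneg h0 (β + 1); positivity)]
        apply ENNReal.ofReal_le_ofReal
        have : (1 / 2) ^ (β + 1) * t ^ (β + 1) ≤ (1 - (1 - t / 2) ^ 2) ^ (β + 1) := by
          rw [← Real.mul_rpow (by norm_num) ht.le]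
          apply Real.rpow_le_rpow (by positivity) _ hb
          nlinarith
        calc _ = ((1 / 2) ^ (β + 1) * t ^ (β + 1)) / (2 * Real.pi) * (ε / 2) := by ring
          _ ≤ _ := by gcongr
    _ = ∫⁻ r in Ioo (1 - t / 2) 1, ENNReal.ofReal (r * ((β + 1) * (1 - r ^ 2) ^ β / Real.pi)) * ENNReal.ofReal (ε / 2) := by
        rw [lintegral_mul_const _ (by fun_prop), radial β hβ (t / 2) (by linarith) (by linarith)]
    _ ≤ _ := by
        rw [muB_polar β _ hm, ← lintegral_indicator measurableSet_Ioo, ← lintegral_indicator measurableSet_Ioo]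
        refine lintegral_mono fun r => ?_
        by_cases hr : r ∈ Ioo (1 - t / 2) 1
        · have h1 : r ∈ Ioo (0:ℝ) 1 := ⟨by linarith [hr.1], hr.2⟩
          rw [indicator_of_mem hr, indicator_of_mem h1]
          gcongr
          refine le_trans (angle_lower u hu r ε hr.2 (by linarith [hr.1]) hε hε1) (measure_mono ?_)
          rintro θ ⟨h2, h3⟩
          have : ‖(r:ℂ) * Complex.exp (θ * Complex.I)‖ = r := by
            rw [norm_mul, Complex.norm_exp_ofReal_mul_I, Complex.norm_real, Real.norm_of_nonneg h1.1.le, mul_one]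
          refine ⟨h2, ?_, ?_, h3⟩
          · rw [this]; exact hr.2
          · rw [this]; linarith [hr.1]
        · rw [indicator_of_notMem hr]; exact zero_le

lemma unit_root (n : ℕ) (hn : 0 < n) (w : ℂ) (hw : ‖w‖ = 1) : ∃ u : ℂ, ‖u‖ = 1 ∧ u ^ n = w := by
  obtain ⟨u, hu⟩ := IsAlgClosed.exists_pow_nat_eq w hn
  refine ⟨u, ?_, hu⟩
  rw [← hu, norm_pow] at hw
  exact (pow_eq_one_iff_of_nonneg (norm_nonneg _) hn.ne').1 hw

lemma pow_lip (n : ℕ) (z u : ℂ) (hz : ‖z‖ ≤ 1) (hu : ‖u‖ ≤ 1) : ‖z ^ n - u ^ n‖ ≤ n * ‖z - u‖ := by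
  induction n with
  | zero => simp
  | succ k ih =>
    have : z ^ (k+1) - u ^ (k+1) = z * (z ^ k - u ^ k) + (z - u) * u ^ k := by ring
    rw [this]
    refine (norm_add_le _ _).trans ?_
    rw [norm_mul, norm_mul, norm_pow]
    have h1 : ‖u‖ ^ k ≤ 1 := pow_le_one₀ (norm_nonneg _) hu
    have h2 : ‖z‖ * ‖z ^ k - u ^ k‖ ≤ 1 * ‖z ^ k - u ^ k‖ := by gcongr
    have h3 : ‖z - u‖ * ‖u‖ ^ k ≤ ‖z - u‖ * 1 := by gcongr
    push_cast
    linarith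

lemma norm_sub_one_sq (w : ℂ) : ‖w - 1‖ ^ 2 = ‖w‖ ^ 2 - 2 * w.re + 1 := by
  rw [← Complex.normSq_eq_norm_sq, ← Complex.normSq_eq_norm_sq, Complex.normSq_apply, Complex.normSq_apply]
  simp; ring

lemma rpow_ident (m : ℕ) (β x : ℝ) (hx : 0 < x) :
    x ^ (β + 1) * x * (x ^ (β + 1) * √x) ^ m =
      x ^ (((m + 1 : ℕ) : ℝ) * (β + 1) + (((m + 1 : ℕ) : ℝ) + 1) / 2) := by
  rw [Real.sqrt_eq_rpow, ← Real.rpow_add hx, ← Real.rpow_mul_natCast hx.le]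
  nth_rewrite 2 [← Real.rpow_one x]
  rw [← Real.rpow_add hx, ← Real.rpow_add hx]
  congr 1
  push_cast
  ring

lemma core_lower (m : ℕ) (a : Fin (m+1) → ℝ) (ha : ∀ j, 0 < a j) (hs : ∑ j, a j = 1)
    (w : Fin m → ℂ) (b lo : ℝ) (hlo : 0 < lo) (hlo1 : lo ≤ a 0) (hb0 : 0 ≤ b) (hb : b ≤ lo)
    (h0 : ∀ j, (w j).re ≤ 1) (h1 : ∀ j, 1 - (w j).re ≤ 2 * b ^ 2) (h2 : ∀ j, |(w j).im| ≤ b) :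
    ∃ v : ℂ, ‖v‖ = 1 ∧ ‖(a 0 : ℂ) * v + ∑ j : Fin m, (a j.succ : ℂ) * w j - 1‖ ≤ 3 * b ^ 2 / lo ^ 2 := by
  have ha0 := ha 0
  rw [Fin.sum_univ_succ] at hs
  have hsn : 0 ≤ ∑ j : Fin m, a j.succ := Finset.sum_nonneg fun j _ => (ha _).le
  set Y := ∑ j : Fin m, a j.succ * (w j).im with hY
  have hYb : |Y| ≤ b := by
    calc |Y| ≤ ∑ j : Fin m, |a j.succ * (w j).im| := Finset.abs_sum_le_sum_abs _ _
      _ ≤ ∑ j : Fin m, a j.succ * b := by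
        refine Finset.sum_le_sum fun j _ => ?_
        rw [abs_mul, abs_of_pos (ha _)]
        exact mul_le_mul_of_nonneg_left (h2 j) (ha _).le
      _ = (∑ j : Fin m, a j.succ) * b := by rw [Finset.sum_mul]
      _ ≤ 1 * b := by gcongr; linarith
      _ = b := one_mul b
  set q := Y / a 0 with hq
  have hqa : a 0 * q = Y := by rw [hq]; field_simp
  have hq1 : |q| ≤ b / lo := by
    rw [hq, abs_div, abs_of_pos ha0]
    gcongr
  have hq2 : q ^ 2 ≤ b ^ 2 / lo ^ 2 := by
    rw [← div_pow, ← sq_abs]; gcongr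
  have hbl : b / lo ≤ 1 := by rw [div_le_one hlo]; exact hb
  have hq3 : q ^ 2 ≤ 1 := by
    rw [← sq_abs]; exact pow_le_one₀ (abs_nonneg _) (hq1.trans hbl)
  have hss := Real.sq_sqrt (show 0 ≤ 1 - q ^ 2 by linarith)
  set p := √(1 - q ^ 2) with hp
  have hp0 : 0 ≤ p := Real.sqrt_nonneg _
  have hp1 : p ≤ 1 := by nlinarith
  have hp2 : 1 - p ≤ q ^ 2 := by nlinarith
  refine ⟨⟨p, -q⟩, ?_, ?_⟩
  · have : ‖(⟨p, -q⟩ : ℂ)‖ ^ 2 = 1 := by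
      rw [← Complex.normSq_eq_norm_sq, Complex.normSq_apply]; simp only; nlinarith
    exact (pow_eq_one_iff_of_nonneg (norm_nonneg _) two_ne_zero).1 this
  · set D := ∑ j : Fin m, a j.succ * (1 - (w j).re) with hD
    have hD0 : 0 ≤ D := Finset.sum_nonneg fun j _ => mul_nonneg (ha _).le (by linarith [h0 j])
    have hD1 : D ≤ 2 * b ^ 2 := by
      calc D ≤ ∑ j : Fin m, a j.succ * (2 * b ^ 2) :=
            Finset.sum_le_sum fun j _ => mul_le_mul_of_nonneg_left (h1 j) (ha _).le
        _ = (∑ j : Fin m, a j.succ) * (2 * b ^ 2) := by rw [Finset.sum_mul]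
        _ ≤ 1 * (2 * b ^ 2) := by gcongr; linarith
        _ = _ := one_mul _
    have hDe : D = (∑ j : Fin m, a j.succ) - ∑ j : Fin m, a j.succ * (w j).re := by
      rw [hD, ← Finset.sum_sub_distrib]; exact Finset.sum_congr rfl fun j _ => by ring
    have e : (a 0 : ℂ) * ⟨p, -q⟩ + ∑ j : Fin m, (a j.succ : ℂ) * w j - 1 =
        ((-(a 0 * (1 - p) + D) : ℝ) : ℂ) := by
      apply Complex.ext
      · simp [Complex.re_sum]
        linarith
      · simp [Complex.im_sum]
        linarith
    rw [e, Complex.norm_real, Real.norm_eq_abs, abs_neg, abs_of_nonneg]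
    · have ha1 : a 0 ≤ 1 := by linarith
      have : a 0 * (1 - p) ≤ 1 * (b ^ 2 / lo ^ 2) := by
        gcongr
        linarith
      have h5 : b ^ 2 ≤ b ^ 2 / lo ^ 2 := by
        rw [le_div_iff₀ (by positivity)]
        have : lo ^ 2 ≤ 1 := pow_le_one₀ hlo.le (by linarith)
        nlinarith [sq_nonneg b]
      have h6 : 3 * b ^ 2 / lo ^ 2 = 3 * (b ^ 2 / lo ^ 2) := by ring
      linarith
    · have : 0 ≤ a 0 * (1 - p) := mul_nonneg ha0.le (by linarith)
      linarith

lemma meas_S (n : ℕ) (α : Fin n → ℂ) (η : ℂ) (δ : ℝ) :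
    MeasurableSet {z | z ∈ polydisc n ∧ ‖(∑ j, α j * z j ^ n) - η‖ ≤ δ} := by
  have h1 : MeasurableSet (polydisc n) := by
    have hp : polydisc n = Set.pi univ (fun _ => ball (0:ℂ) 1) := by
      ext z; simp [polydisc]
    rw [hp]; exact MeasurableSet.univ_pi (fun _ => measurableSet_ball)
  exact h1.inter (measurableSet_le (f := fun z : Fin n → ℂ => ‖(∑ j, α j * z j ^ n) - η‖)
    (g := fun _ => δ) (by fun_prop) (by fun_prop))

/-- consequences of being in the sublevel set -/
lemma core_upper (n : ℕ) (hn : 0 < n) (α u : Fin n → ℂ) (hα : ∑ j, ‖α j‖ = 1)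
    (η : ℂ) (hη : ‖η‖ = 1) (hu : ∀ j, ‖u j‖ = 1) (hu' : ∀ j, α j * u j ^ n = ‖α j‖ * η)
    (lo : ℝ) (hlo : 0 < lo) (hlo' : ∀ j, lo ≤ ‖α j‖) (δ : ℝ)
    (z : Fin n → ℂ) (hz : z ∈ polydisc n) (hzδ : ‖(∑ j, α j * z j ^ n) - η‖ ≤ δ) (j : Fin n) :
    1 - δ / lo ≤ ‖z j‖ ∧ ‖z j ^ n - u j ^ n‖ ≤ √2 * √(δ / lo) := by
  have hu0 : ∀ j, u j ^ n ≠ 0 := fun j => pow_ne_zero _ (by rw [← norm_pos_iff, hu]; norm_num)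
  set w : Fin n → ℂ := fun j => z j ^ n / u j ^ n with hw
  have hwz : ∀ j, z j ^ n = u j ^ n * w j := fun j => by
    rw [hw]; field_simp [hu0 j]
  have hwn : ∀ j, ‖w j‖ = ‖z j‖ ^ n := fun j => by simp [hw, hu]
  have hw1 : ∀ j, ‖w j‖ ≤ 1 := fun j => by
    rw [hwn]; exact pow_le_one₀ (norm_nonneg _) (hz j).le
  have hre : ∀ j, (w j).re ≤ 1 := fun j => (Complex.re_le_norm _).trans (hw1 j)
  have e : (∑ j, α j * z j ^ n) - η = -η * (1 - ∑ j, (‖α j‖ : ℂ) * w j) := by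
    have : ∀ j, α j * z j ^ n = η * ((‖α j‖ : ℂ) * w j) := fun j => by
      rw [hwz, ← mul_assoc, hu']; ring
    simp_rw [this, ← Finset.mul_sum]; ring
  rw [e, norm_mul, norm_neg, hη, one_mul] at hzδ
  have h1 : ∑ j, ‖α j‖ * (1 - (w j).re) ≤ δ := by
    refine le_trans (le_of_eq ?_) ((Complex.re_le_norm _).trans hzδ)
    simp [Complex.re_sum, mul_sub, hα]
  have h2 : ‖α j‖ * (1 - (w j).re) ≤ δ :=
    (Finset.single_le_sum (f := fun j => ‖α j‖ * (1 - (w j).re))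
      (fun i _ => mul_nonneg (norm_nonneg _) (by linarith [hre i])) (Finset.mem_univ j)).trans h1
  have h3 : 1 - (w j).re ≤ δ / lo := by
    rw [le_div_iff₀ hlo]
    have := mul_le_mul_of_nonneg_right (hlo' j) (show 0 ≤ 1 - (w j).re by linarith [hre j])
    linarith
  constructor
  · have h4 : ‖z j‖ ^ n ≤ ‖z j‖ := pow_le_of_le_one (norm_nonneg _) (hz j).le hn.ne'
    have := Complex.re_le_norm (w j)
    rw [hwn] at this
    linarith
  · have h5 : z j ^ n - u j ^ n = u j ^ n * (w j - 1) := by rw [hwz]; ring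
    rw [h5, norm_mul, norm_pow, hu, one_pow, one_mul, ← Real.sqrt_mul (by norm_num)]
    apply Real.le_sqrt_of_sq_le
    rw [norm_sub_one_sq]
    have : ‖w j‖ ^ 2 ≤ 1 := pow_le_one₀ (norm_nonneg _) (hw1 j)
    linarith

/-- existence of the completing point -/
lemma core_slice (m : ℕ) (α u : Fin (m+1) → ℂ) (hα : ∑ j, ‖α j‖ = 1) (hα0 : ∀ j, α j ≠ 0)
    (η : ℂ) (hη : ‖η‖ = 1) (hu : ∀ j, ‖u j‖ = 1) (hu' : ∀ j, α j * u j ^ (m+1) = ‖α j‖ * η)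
    (lo : ℝ) (hlo : 0 < lo) (hlo' : ∀ j, lo ≤ ‖α j‖) (δ t : ℝ) (ht : 0 < t)
    (htδ : 4 * ((m+1 : ℕ):ℝ) ^ 2 * t / lo ^ 2 ≤ δ) (hδ : δ ≤ 1)
    (z : Fin m → ℂ) (hz : ∀ j, z j ∈ {z : ℂ | ‖z‖ < 1 ∧ 1 - t ≤ ‖z‖ ∧ ‖z - u j.succ‖ ≤ √t}) :
    ∃ v : ℂ, ‖v‖ = 1 ∧ {x : ℂ | ‖x‖ < 1 ∧ 1 - t ≤ ‖x‖ ∧ ‖x - v‖ ≤ t} ⊆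
      {x | (Fin.cons x z : Fin (m+1) → ℂ) ∈
        {z | z ∈ polydisc (m+1) ∧ ‖(∑ j, α j * z j ^ (m+1)) - η‖ ≤ δ}} := by
  have hN1 : (1:ℝ) ≤ ((m+1 : ℕ):ℝ) := by exact_mod_cast Nat.succ_pos m
  have hn0 : 0 < m + 1 := Nat.succ_pos m
  set N : ℝ := ((m+1 : ℕ) : ℝ) with hN
  have hlo1 : lo ≤ 1 := by
    rw [← hα]
    exact (hlo' 0).trans (Finset.single_le_sum (f := fun j => ‖α j‖) (fun _ _ => norm_nonneg _) (Finset.mem_univ 0))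
  have hst := Real.sq_sqrt ht.le
  have hst0 := Real.sqrt_nonneg t
  have hNt : 4 * (N ^ 2 * t) ≤ lo ^ 2 := by
    have := htδ.trans hδ
    rw [div_le_one (by positivity)] at this
    linarith
  have ht1 : t ≤ 1 := by nlinarith
  have hu0 : ∀ j, u j ^ (m+1) ≠ 0 := fun j => pow_ne_zero _ (by rw [← norm_pos_iff, hu]; norm_num)
  set w : Fin m → ℂ := fun j => z j ^ (m+1) / u j.succ ^ (m+1) with hw
  have hwz : ∀ j, z j ^ (m+1) = u j.succ ^ (m+1) * w j := fun j => by
    rw [hw]; field_simp [hu0 j.succ]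
  have hwn : ∀ j, ‖w j‖ = ‖z j‖ ^ (m+1) := fun j => by simp [hw, hu]
  have hw1 : ∀ j, ‖w j‖ ≤ 1 := fun j => by
    rw [hwn]; exact pow_le_one₀ (norm_nonneg _) (hz j).1.le
  have hre : ∀ j, (w j).re ≤ 1 := fun j => (Complex.re_le_norm _).trans (hw1 j)
  have hd : ∀ j, ‖w j - 1‖ ≤ N * √t := fun j => by
    have h5 : z j ^ (m+1) - u j.succ ^ (m+1) = u j.succ ^ (m+1) * (w j - 1) := by rw [hwz]; ring
    have h6 := pow_lip (m+1) (z j) (u j.succ) (hz j).1.le (hu _).le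
    rw [h5, norm_mul, norm_pow, hu, one_pow, one_mul] at h6
    refine h6.trans ?_
    gcongr
    exact (hz j).2.2
  have hlow : ∀ j, 1 - N * t ≤ ‖w j‖ := fun j => by
    rw [hwn]
    have h1 := one_add_mul_le_pow (a := ‖z j‖ - 1) (by linarith [norm_nonneg (z j)]) (m+1)
    rw [add_sub_cancel] at h1
    have h2 := (hz j).2.1
    nlinarith
  obtain ⟨v, hv, hv2⟩ := core_lower m (fun j => ‖α j‖) (fun j => norm_pos_iff.2 (hα0 j)) hα w (N * √t) lo hlo
    (hlo' 0) (by positivity)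
    (by
      apply abs_le_of_sq_le_sq' _ hlo.le |>.2
      rw [mul_pow, hst]; nlinarith)
    hre
    (fun j => by
      have h1 := norm_sub_one_sq (w j)
      have h2 : ‖w j - 1‖ ^ 2 ≤ (N * √t) ^ 2 := by gcongr; exact hd j
      rw [mul_pow, hst] at *
      have h3 := hlow j
      have h4 : 1 - 2 * (N * t) ≤ ‖w j‖ ^ 2 := by nlinarith [hw1 j, norm_nonneg (w j), sq_nonneg (‖w j‖ - 1)]
      have h5 : N * t ≤ N ^ 2 * t := by nlinarith
      linarith [mul_nonneg (sq_nonneg N) ht.le])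
    (fun j => by
      refine le_trans ?_ (hd j)
      have := Complex.abs_im_le_norm (w j - 1)
      simpa using this)
  rw [mul_pow, hst] at hv2
  obtain ⟨x₀, hx₀, hx₀'⟩ := unit_root (m+1) hn0 (u 0 ^ (m+1) * v) (by simp [hu, hv])
  refine ⟨x₀, hx₀, ?_⟩
  rintro x ⟨hx1, hx2, hx3⟩
  refine ⟨?_, ?_⟩
  · intro j
    refine Fin.cases ?_ (fun i => ?_) j
    · simpa using hx1
    · simpa using (hz i).1
  · rw [Fin.sum_univ_succ]
    simp only [Fin.cons_zero, Fin.cons_succ]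
    have e : α 0 * x ^ (m+1) + ∑ i : Fin m, α i.succ * z i ^ (m+1) - η =
        η * ((‖α 0‖ : ℂ) * v + ∑ j : Fin m, (‖α j.succ‖ : ℂ) * w j - 1) + α 0 * (x ^ (m+1) - x₀ ^ (m+1)) := by
      have h1 : ∀ i : Fin m, α i.succ * z i ^ (m+1) = η * ((‖α i.succ‖ : ℂ) * w i) := fun i => by
        rw [hwz, ← mul_assoc, hu']; ring
      have h2 : α 0 * x₀ ^ (m+1) = ‖α 0‖ * η * v := by rw [hx₀', ← mul_assoc, hu']
      simp_rw [h1, ← Finset.mul_sum]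
      rw [mul_sub (α 0), h2]; ring
    rw [e]
    refine (norm_add_le _ _).trans ?_
    rw [norm_mul, norm_mul, hη, one_mul]
    have h3 := pow_lip (m+1) x x₀ hx1.le hx₀.le
    have hα1 : ‖α 0‖ ≤ 1 := by
      rw [← hα]
      exact Finset.single_le_sum (f := fun j => ‖α j‖) (fun _ _ => norm_nonneg _) (Finset.mem_univ 0)
    have h4 : ‖α 0‖ * ‖x ^ (m+1) - x₀ ^ (m+1)‖ ≤ 1 * (N * t) := by
      gcongr
      exact h3.trans (by gcongr)
    have h5 : N * t ≤ N ^ 2 * t / lo ^ 2 := by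
      rw [le_div_iff₀ (by positivity)]
      have h6 : lo ^ 2 ≤ 1 := pow_le_one₀ hlo.le hlo1
      have h7 : N * t * lo ^ 2 ≤ N * t * 1 := by gcongr
      have h9 : 0 ≤ N * t * (N - 1) := mul_nonneg (by positivity) (by linarith)
      nlinarith
    have h8 : 4 * N ^ 2 * t / lo ^ 2 = 3 * (N ^ 2 * t) / lo ^ 2 + N ^ 2 * t / lo ^ 2 := by ring
    linarith

theorem sum_of_powers_sublevel_volume (n : ℕ) (α : Fin n → ℂ)
    (hα : ∑ j, ‖α j‖ = 1) (hα0 : ∀ j, α j ≠ 0) (β : ℝ) (hβ : -1 < β)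
    (η : ℂ) (hη : ‖η‖ = 1) :
    ∃ c > (0:ℝ), ∃ C > (0:ℝ), ∃ δ₀ > (0:ℝ), ∀ δ : ℝ, 0 < δ → δ < δ₀ →
      ENNReal.ofReal (c * δ ^ ((n:ℝ) * (β + 1) + ((n:ℝ) + 1) / 2)) ≤
          Vbeta n β {z | z ∈ polydisc n ∧ ‖(∑ j, α j * z j ^ n) - η‖ ≤ δ} ∧
        Vbeta n β {z | z ∈ polydisc n ∧ ‖(∑ j, α j * z j ^ n) - η‖ ≤ δ} ≤
          ENNReal.ofReal (C * δ ^ ((n:ℝ) * (β + 1) + ((n:ℝ) + 1) / 2)) := by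
  rcases n with _ | m
  · simp at hα
  have hn0 : 0 < m + 1 := Nat.succ_pos m
  obtain ⟨j₀, hj₀⟩ := Finite.exists_min (fun j => ‖α j‖)
  set lo := ‖α j₀‖ with hlodef
  have hlo : 0 < lo := norm_pos_iff.2 (hα0 j₀)
  have hlo1 : lo ≤ 1 := by
    rw [← hα]
    exact Finset.single_le_sum (f := fun j => ‖α j‖) (fun _ _ => norm_nonneg _) (Finset.mem_univ j₀)
  have hex : ∀ j, ∃ u : ℂ, ‖u‖ = 1 ∧ α j * u ^ (m+1) = ‖α j‖ * η := by
    intro j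
    have hj : (‖α j‖ : ℂ) ≠ 0 := by
      rw [Ne, Complex.ofReal_eq_zero, norm_eq_zero]; exact hα0 j
    obtain ⟨u, hu, hu2⟩ := unit_root (m+1) hn0 (‖α j‖ * η / α j) (by
      rw [norm_div, norm_mul, hη, Complex.norm_real, norm_norm, mul_one]
      exact div_self (norm_ne_zero_iff.2 (hα0 j)))
    refine ⟨u, hu, ?_⟩
    rw [hu2]; field_simp [hα0 j]
  choose u hu hu' using hex
  obtain ⟨K, hK, hKU⟩ := muB_upper (m+1) hn0 β hβ
  obtain ⟨k, hk, hkL⟩ := muB_lower β hβ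
  set e : ℝ := (((m+1 : ℕ):ℝ) * (β + 1) + (((m+1 : ℕ):ℝ) + 1) / 2) with he
  have hN1 : (1:ℝ) ≤ ((m+1 : ℕ):ℝ) := by exact_mod_cast Nat.succ_pos m
  set κ : ℝ := lo ^ 2 / (4 * ((m+1 : ℕ):ℝ) ^ 2) with hκ
  have hκ0 : 0 < κ := by positivity
  have hκ1 : κ ≤ 1 := by
    rw [hκ, div_le_one (by positivity)]
    have : lo ^ 2 ≤ 1 := pow_le_one₀ hlo.le hlo1
    nlinarith
  refine ⟨k ^ (m+1) * κ ^ e, by positivity, K ^ (m+1) * √2 ^ m * (1 / lo) ^ e, by positivity,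
    lo / 2, by positivity, ?_⟩
  intro δ hδ hδlo
  have hδ1 : δ ≤ 1 := by linarith
  rw [Vbeta_eq_pi _ _ hβ]
  have hS := meas_S (m+1) α η δ
  set S := {z | z ∈ polydisc (m+1) ∧ ‖(∑ j, α j * z j ^ (m+1)) - η‖ ≤ δ} with hSdef
  constructor
  · set t := κ * δ with ht
    have ht0 : 0 < t := by positivity
    have ht1 : t ≤ 1 := by nlinarith
    have hst1 : √t ≤ 1 := Real.sqrt_le_one.2 ht1
    have htst : t ≤ √t := Real.le_sqrt_of_sq_le (by nlinarith)
    refine le_trans ?_ (pi_lower (muB β) m S hS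
      (fun j => {z : ℂ | ‖z‖ < 1 ∧ 1 - t ≤ ‖z‖ ∧ ‖z - u j.succ‖ ≤ √t}) (fun j => measLow _ _ _)
      (ENNReal.ofReal (k * t ^ (β + 1) * t)) ?_)
    · calc ENNReal.ofReal (k ^ (m+1) * κ ^ e * δ ^ e)
          = ENNReal.ofReal (k * t ^ (β + 1) * t) * ∏ j : Fin m, ENNReal.ofReal (k * t ^ (β + 1) * √t) := by
            rw [Finset.prod_const, Finset.card_univ, Fintype.card_fin, ← ENNReal.ofReal_pow (by positivity),
              ← ENNReal.ofReal_mul (by positivity)]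
            congr 1
            rw [mul_assoc, ← Real.mul_rpow hκ0.le hδ.le, ← ht, he, ← rpow_ident m β t ht0]
            ring
        _ ≤ _ := by
            gcongr with j
            exact hkL (u j.succ) t (√t) (hu _) ht0 htst hst1
    · intro z hz
      obtain ⟨v, hv, hsub⟩ := core_slice m α u hα hα0 η hη hu hu' lo hlo hj₀ δ t ht0
        (by rw [ht, hκ]; apply le_of_eq; field_simp) hδ1 z hz
      exact (hkL v t t hv ht0 le_rfl ht1).trans (measure_mono hsub)
  · set t := δ / lo with ht
    have ht0 : 0 < t := by positivity
    have ht2 : t ≤ 1 / 2 := by rw [ht, div_le_iff₀ hlo]; linarith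
    refine le_trans (pi_upper (muB β) m S hS
      (fun j => {z : ℂ | 1 - t ≤ ‖z‖ ∧ ‖z ^ (m+1) - u j.succ ^ (m+1)‖ ≤ √2 * √t}) (fun j => measUp _ _ _ _)
      (ENNReal.ofReal (K * t ^ (β + 1) * t)) ?_ ?_) ?_
    · intro z hz j
      exact core_upper (m+1) hn0 α u hα η hη hu hu' lo hlo hj₀ δ z hz.1 hz.2 j.succ
    · intro z
      refine le_trans (measure_mono ?_) (hKU ((η - ∑ j : Fin m, α j.succ * z j ^ (m+1)) / α 0) t t ht0 ht2 ht0)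
      rintro x ⟨hx1, hx2⟩
      have h1 := (core_upper (m+1) hn0 α u hα η hη hu hu' lo hlo hj₀ δ _ hx1 hx2 0).1
      refine ⟨by simpa using h1, ?_⟩
      rw [Fin.sum_univ_succ] at hx2
      simp only [Fin.cons_zero, Fin.cons_succ] at hx2
      have h2 : x ^ (m+1) - (η - ∑ j : Fin m, α j.succ * z j ^ (m+1)) / α 0 =
          (α 0 * x ^ (m+1) + ∑ j : Fin m, α j.succ * z j ^ (m+1) - η) / α 0 := by
        field_simp [hα0 0]; ring
      rw [h2, norm_div, ht]
      gcongr
      exact hj₀ 0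
    · calc _ ≤ ENNReal.ofReal (K * t ^ (β + 1) * t) * ∏ j : Fin m, ENNReal.ofReal (K * t ^ (β + 1) * (√2 * √t)) := by
            gcongr with j
            exact hKU _ t _ ht0 ht2 (by positivity)
        _ = _ := by
            rw [Finset.prod_const, Finset.card_univ, Fintype.card_fin, ← ENNReal.ofReal_pow (by positivity),
              ← ENNReal.ofReal_mul (by positivity)]
            congr 1
            rw [mul_assoc (K ^ (m+1) * √2 ^ m), ← Real.mul_rpow (by positivity) hδ.le,
              show 1 / lo * δ = t by rw [ht]; ring, he, ← rpow_ident m β t ht0]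
            ring

end
end

section
/- Let n ≥ 2, let f(z) = z_1·z_2·⋯·z_n, and define Φ : 𝔻ⁿ → 𝔻ⁿ by Φ(z) = (f(z), f(z), …, f(z), 0) (the first n-1 components equal f(z), the last component is 0). Then for β > -1 the composition operator C_Φ is bounded on A²_β(𝔻ⁿ) if and only if n ≤ β + 3. -/
open MeasureTheory Metric Set ENNReal

noncomputable section

/-- The composition operator `C_Φ` is bounded on the weighted Bergman space `A²_β(𝔻ⁿ)`. -/
def bddBergman (n : ℕ) (β : ℝ) (Φ : (Fin n → ℂ) → (Fin n → ℂ)) : Prop :=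
  ∃ C > (0:ℝ), ∀ f : (Fin n → ℂ) → ℂ, DifferentiableOn ℂ f (polydisc n) →
    ∫⁻ z, ENNReal.ofReal (‖f (Φ z)‖ ^ 2) ∂(Vbeta n β) ≤
      ENNReal.ofReal C * ∫⁻ z, ENNReal.ofReal (‖f z‖ ^ 2) ∂(Vbeta n β)


open scoped ComplexConjugate

/-- Radial moments of a measure on the plane. -/
def mom (μ : Measure ℂ) (j : ℕ) : ℝ := ∫ z, ‖z‖ ^ (2 * j) ∂μ

/-- Rotation invariant finite measures carried by the closed unit disc. -/
structure GoodMeas (μ : Measure ℂ) : Prop where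
  fin : IsFiniteMeasure μ
  rot : ∀ u : ℂ, ‖u‖ = 1 → μ.map (fun z => u * z) = μ
  supp : ∀ᵐ z ∂μ, ‖z‖ ≤ 1
  pos : ∀ j, 0 < mom μ j

/-- Good measures carried by a smaller disc, whose moments do not decay too fast. -/
structure SmallMeas (μ : Measure ℂ) : Prop extends GoodMeas μ where
  supp' : ∃ ρ : ℝ, 0 < ρ ∧ ρ < 1 ∧ ∀ᵐ z ∂μ, ‖z‖ ≤ ρ
  growth : ∃ M R : ℝ, 0 < R ∧ 0 < M ∧ ∀ j, (mom μ j)⁻¹ ≤ M * R ^ j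

/-- Monomials. -/
def mono {n : ℕ} (α : Fin n → ℕ) (z : Fin n → ℂ) : ℂ := ∏ i, z i ^ α i

lemma orth1 {μ : Measure ℂ} (h : GoodMeas μ) (j l : ℕ) :
    ∫ z, z ^ j * conj (z ^ l) ∂μ = if j = l then (mom μ j : ℂ) else 0 := by
  split_ifs with hjl
  · subst hjl
    rw [mom, ← integral_complex_ofReal]
    congr 1
    ext z
    rw [Complex.mul_conj, Complex.normSq_eq_norm_sq]
    push_cast
    rw [norm_pow]
    push_cast
    ring
  · set θ : ℝ := Real.pi / ((j : ℝ) - l) with hθ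
    have hne : ((j : ℝ) - l) ≠ 0 := by
      rw [sub_ne_zero]; exact_mod_cast hjl
    set u : ℂ := Complex.exp (θ * Complex.I) with hu
    have hun : ‖u‖ = 1 := Complex.norm_exp_ofReal_mul_I θ
    have key : u ^ j * conj (u ^ l) = -1 := by
      rw [hu, map_pow, ← Complex.exp_conj, ← Complex.exp_nat_mul, ← Complex.exp_nat_mul,
        ← Complex.exp_add, ← Complex.exp_pi_mul_I]
      congr 1
      simp only [map_mul, Complex.conj_ofReal, Complex.conj_I]
      have : (θ : ℂ) * (j - l) = Real.pi := by
        rw [hθ]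
        have : ((j : ℂ) - l) ≠ 0 := by exact_mod_cast hne
        push_cast
        field_simp
      rw [← this]; ring
    have h1 : ∫ z, z ^ j * conj (z ^ l) ∂μ = - ∫ z, z ^ j * conj (z ^ l) ∂μ := by
      conv_lhs => rw [← h.rot u hun]
      rw [integral_map (by fun_prop) (by fun_prop), ← integral_neg]
      congr 1
      ext z
      calc (u * z) ^ j * conj ((u * z) ^ l) = (u ^ j * conj (u ^ l)) * (z ^ j * conj (z ^ l)) := by
            simp only [mul_pow, map_mul]; ring
        _ = _ := by rw [key]; ring
    linear_combination h1 / 2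

lemma orthn {μ : Measure ℂ} (h : GoodMeas μ) {n : ℕ} (α α' : Fin n → ℕ) :
    ∫ z, mono α z * conj (mono α' z) ∂(Measure.pi fun _ : Fin n => μ) =
      if α = α' then ((∏ i, mom μ (α i) : ℝ) : ℂ) else 0 := by
  have := h.fin
  have h1 : ∀ z : Fin n → ℂ, mono α z * conj (mono α' z) =
      ∏ i, (z i ^ α i * conj (z i ^ α' i)) := by
    intro z
    simp only [mono, map_prod, Finset.prod_mul_distrib]
  simp_rw [h1]
  rw [integral_fintype_prod_eq_prod (f := fun i (w : ℂ) => w ^ α i * conj (w ^ α' i))]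
  simp only [orth1 h]
  split_ifs with hα
  · subst hα; simp
  · obtain ⟨i, hi⟩ := Function.ne_iff.mp hα
    exact Finset.prod_eq_zero (Finset.mem_univ i) (by simp [hi])

lemma pi_supp {μ : Measure ℂ} (hf : IsFiniteMeasure μ) {ρ : ℝ} (h : ∀ᵐ z ∂μ, ‖z‖ ≤ ρ) (n : ℕ) :
    ∀ᵐ z ∂(Measure.pi fun _ : Fin n => μ), ∀ i, ‖z i‖ ≤ ρ := by
  rw [ae_all_iff]
  intro i
  exact (Measure.quasiMeasurePreserving_eval (μ := fun _ : Fin n => μ) i).ae h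

lemma mono_meas {n : ℕ} (α : Fin n → ℕ) : Continuous (mono α) := by
  unfold mono; fun_prop

lemma mono_bd {n : ℕ} (α : Fin n → ℕ) {z : Fin n → ℂ} (h : ∀ i, ‖z i‖ ≤ 1) : ‖mono α z‖ ≤ 1 := by
  unfold mono
  rw [norm_prod]
  exact Finset.prod_le_one (fun _ _ => norm_nonneg _) (fun i _ => by
    rw [norm_pow]; exact pow_le_one₀ (norm_nonneg _) (h i))

/-- L² norm of a polynomial. -/
lemma norm_sum {μ : Measure ℂ} (h : GoodMeas μ) {n : ℕ} {κ : Type*} (A : Finset κ)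
    (e : κ → Fin n → ℕ) (he : Set.InjOn e A) (b : κ → ℂ) :
    ∫ z, ‖∑ k ∈ A, b k * mono (e k) z‖ ^ 2 ∂(Measure.pi fun _ : Fin n => μ) =
      ∑ k ∈ A, ‖b k‖ ^ 2 * ∏ i, mom μ (e k i) := by
  have := h.fin
  have hInt : ∀ k l, Integrable (fun z => mono (e k) z * conj (mono (e l) z))
      (Measure.pi fun _ : Fin n => μ) := by
    intro k l
    refine Integrable.of_bound (C := 1) ?_ ?_
    · exact ((mono_meas _).mul (Complex.continuous_conj.comp (mono_meas _))).aestronglyMeasurable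
    · filter_upwards [pi_supp h.fin h.supp n] with z hz
      rw [norm_mul, RCLike.norm_conj]
      exact mul_le_one₀ (mono_bd _ hz) (norm_nonneg _) (mono_bd _ hz)
  apply Complex.ofReal_injective
  rw [← integral_complex_ofReal]
  have h1 : ∀ z : Fin n → ℂ, ((‖∑ k ∈ A, b k * mono (e k) z‖ ^ 2 : ℝ) : ℂ) =
      ∑ k ∈ A, ∑ l ∈ A, (b k * conj (b l)) * (mono (e k) z * conj (mono (e l) z)) := by
    intro z
    rw [← Complex.normSq_eq_norm_sq, ← Complex.mul_conj, map_sum, Finset.sum_mul_sum]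
    refine Finset.sum_congr rfl fun k _ => Finset.sum_congr rfl fun l _ => ?_
    rw [map_mul]; ring
  simp_rw [h1]
  rw [integral_finsetSum _ (fun k _ => integrable_finsetSum _ (fun l _ => (hInt k l).const_mul _))]
  push_cast
  refine Finset.sum_congr rfl fun k hk => ?_
  rw [integral_finsetSum _ (fun l _ => (hInt k l).const_mul _)]
  rw [Finset.sum_eq_single k]
  · rw [integral_const_mul, orthn h, if_pos rfl, Complex.mul_conj, Complex.normSq_eq_norm_sq]
    push_cast; rfl
  · intro l hl hlk
    rw [integral_const_mul, orthn h, if_neg (fun hh => hlk (he hl hk hh.symm)), mul_zero]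
  · exact fun hh => absurd hk hh

/-- coefficients -/
def acoef (μ : Measure ℂ) {n : ℕ} (F : (Fin n → ℂ) → ℂ) (α : Fin n → ℕ) : ℂ :=
  (((∏ i, mom μ (α i))⁻¹ : ℝ) : ℂ) * ∫ z, F z * conj (mono α z) ∂(Measure.pi fun _ : Fin n => μ)

lemma bessel {μ : Measure ℂ} (h : GoodMeas μ) {n : ℕ} {κ : Type*} (A : Finset κ)
    (e : κ → Fin n → ℕ) (he : Set.InjOn e A) (F : (Fin n → ℂ) → ℂ)
    (hF : AEStronglyMeasurable F (Measure.pi fun _ : Fin n => μ)) (C : ℝ)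
    (hb : ∀ᵐ z ∂(Measure.pi fun _ : Fin n => μ), ‖F z‖ ≤ C) :
    ∑ k ∈ A, ‖acoef μ F (e k)‖ ^ 2 * ∏ i, mom μ (e k i) ≤
      ∫ z, ‖F z‖ ^ 2 ∂(Measure.pi fun _ : Fin n => μ) := by
  have := h.fin
  set ν := (Measure.pi fun _ : Fin n => μ) with hν
  set a := fun k => acoef μ F (e k) with ha
  set H := fun z => ∑ k ∈ A, a k * mono (e k) z with hH
  have hHc : Continuous H := by
    rw [hH]; exact continuous_finsetSum _ fun k _ => continuous_const.mul (mono_meas _)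
  have hHb : ∀ᵐ z ∂ν, ‖H z‖ ≤ ∑ k ∈ A, ‖a k‖ := by
    filter_upwards [pi_supp h.fin h.supp n] with z hz
    refine (norm_sum_le _ _).trans (Finset.sum_le_sum fun k _ => ?_)
    rw [norm_mul]
    exact mul_le_of_le_one_right (norm_nonneg _) (mono_bd _ hz)
  have hmono : ∀ k, Integrable (fun z => F z * conj (mono (e k) z)) ν := by
    intro k
    refine Integrable.of_bound (C := C) ?_ ?_
    · exact hF.mul (Complex.continuous_conj.comp (mono_meas _)).aestronglyMeasurable
    · filter_upwards [pi_supp h.fin h.supp n, hb] with z hz hz'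
      rw [norm_mul, RCLike.norm_conj]
      exact (mul_le_of_le_one_right (norm_nonneg _) (mono_bd _ hz)).trans hz'
  have hFint : Integrable (fun z => ‖F z‖ ^ 2) ν := by
    refine Integrable.of_bound (C := C ^ 2) (hF.norm.pow 2) ?_
    filter_upwards [hb] with z hz
    rw [norm_pow, norm_norm]
    exact pow_le_pow_left₀ (norm_nonneg _) hz 2
  have hHint : Integrable (fun z => ‖H z‖ ^ 2) ν := by
    refine Integrable.of_bound (C := (∑ k ∈ A, ‖a k‖) ^ 2) (hHc.norm.pow 2).aestronglyMeasurable ?_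
    filter_upwards [hHb] with z hz
    rw [norm_pow, norm_norm]
    exact pow_le_pow_left₀ (norm_nonneg _) hz 2
  have hcross : ∀ z, F z * conj (H z) = ∑ k ∈ A, conj (a k) * (F z * conj (mono (e k) z)) := by
    intro z
    rw [hH]; simp only [map_sum, map_mul, Finset.mul_sum]
    exact Finset.sum_congr rfl fun k _ => by ring
  have hcint : Integrable (fun z => F z * conj (H z)) ν := by
    simp_rw [hcross]
    exact integrable_finsetSum _ fun k _ => (hmono k).const_mul _
  have hpos : ∀ k, 0 < ∏ i, mom μ (e k i) := fun k => Finset.prod_pos fun i _ => h.pos _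
  have hcI : ∫ z, F z * conj (H z) ∂ν = ((∑ k ∈ A, ‖a k‖ ^ 2 * ∏ i, mom μ (e k i) : ℝ) : ℂ) := by
    simp_rw [hcross]
    rw [integral_finsetSum _ fun k _ => (hmono k).const_mul _]
    push_cast
    refine Finset.sum_congr rfl fun k _ => ?_
    rw [integral_const_mul]
    have h2 : ∫ z, F z * conj (mono (e k) z) ∂ν = ((∏ i, mom μ (e k i) : ℝ) : ℂ) * a k := by
      rw [ha]; simp only [acoef]
      rw [← mul_assoc, ← Complex.ofReal_mul, mul_inv_cancel₀ (hpos k).ne']; simp [hν]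
    rw [h2, ← Complex.ofReal_pow, ← Complex.normSq_eq_norm_sq, ← Complex.mul_conj]
    push_cast; ring
  have hre : ∫ z, (F z * conj (H z)).re ∂ν = ∑ k ∈ A, ‖a k‖ ^ 2 * ∏ i, mom μ (e k i) := by
    have := integral_re hcint
    simp only [RCLike.re_eq_complex_re] at this
    rw [this, hcI, Complex.ofReal_re]
  have hHI := norm_sum h A e he a
  have hnn : 0 ≤ ∫ z, (‖F z‖ ^ 2 - 2 * (F z * conj (H z)).re + ‖H z‖ ^ 2) ∂ν := by
    refine integral_nonneg fun z => ?_
    have : ‖F z - H z‖ ^ 2 = ‖F z‖ ^ 2 - 2 * (F z * conj (H z)).re + ‖H z‖ ^ 2 := by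
      rw [← Complex.normSq_eq_norm_sq, ← Complex.normSq_eq_norm_sq, ← Complex.normSq_eq_norm_sq,
        Complex.normSq_sub]; ring
    simp only [Pi.zero_apply]
    rw [← this]; positivity
  have hcr : Integrable (fun z => 2 * (F z * conj (H z)).re) ν := hcint.re.const_mul 2
  have hs : ∫ z, (‖F z‖ ^ 2 - 2 * (F z * conj (H z)).re + ‖H z‖ ^ 2) ∂ν =
      ∫ z, (‖F z‖ ^ 2 - 2 * (F z * conj (H z)).re) ∂ν + ∫ z, ‖H z‖ ^ 2 ∂ν :=
    integral_add (hFint.sub hcr) hHint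
  rw [hs, integral_sub hFint hcr, integral_const_mul, hre] at hnn
  rw [← hν] at hHI
  linarith


/-- Reproducing kernel. -/
def Ker (μ : Measure ℂ) (w z : ℂ) : ℂ := ∑' j : ℕ, w ^ j * conj (z ^ j) * ((mom μ j)⁻¹ : ℝ)

lemma hasSum_int {X : Type*} [MeasurableSpace X] {ν : Measure X} [IsFiniteMeasure ν]
    {F : ℕ → X → ℂ} {f : X → ℂ} (b : ℕ → ℝ) (hF : ∀ n, AEStronglyMeasurable (F n) ν)
    (hb : ∀ n, ∀ᵐ a ∂ν, ‖F n a‖ ≤ b n) (hs : Summable b)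
    (hl : ∀ᵐ a ∂ν, HasSum (fun n => F n a) (f a)) :
    HasSum (fun n => ∫ a, F n a ∂ν) (∫ a, f a ∂ν) :=
  hasSum_integral_of_dominated_convergence (fun n _ => b n) hF hb
    (Filter.Eventually.of_forall fun _ => hs) (integrable_const _) hl

lemma ker_term_bd (μ : Measure ℂ) (h : GoodMeas μ) {ε : ℝ} {w z : ℂ} (hw : ‖w‖ ≤ ε) (hz : ‖z‖ ≤ 1)
    (j : ℕ) : ‖w ^ j * conj (z ^ j) * ((mom μ j)⁻¹ : ℝ)‖ ≤ ε ^ j * (mom μ j)⁻¹ := by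
  have hm := inv_pos.mpr (h.pos j)
  rw [norm_mul, norm_mul, RCLike.norm_conj, norm_pow, norm_pow, Complex.norm_real,
    Real.norm_of_nonneg hm.le]
  refine mul_le_mul_of_nonneg_right ?_ hm.le
  have h1 : ‖w‖ ^ j ≤ ε ^ j := pow_le_pow_left₀ (norm_nonneg _) hw j
  have h2 : ‖z‖ ^ j ≤ 1 := pow_le_one₀ (norm_nonneg _) hz
  calc _ ≤ ‖w‖ ^ j := mul_le_of_le_one_right (by positivity) h2
    _ ≤ _ := h1

lemma ker_hasSum {μ : Measure ℂ} (h : GoodMeas μ) {ε : ℝ}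
    (hs : Summable fun j => ε ^ j * (mom μ j)⁻¹) {w z : ℂ} (hw : ‖w‖ ≤ ε) (hz : ‖z‖ ≤ 1) :
    HasSum (fun j : ℕ => w ^ j * conj (z ^ j) * ((mom μ j)⁻¹ : ℝ)) (Ker μ w z) :=
  (Summable.of_norm_bounded hs (ker_term_bd μ h hw hz)).hasSum

lemma ker_bd {μ : Measure ℂ} (h : GoodMeas μ) {ε : ℝ}
    (hs : Summable fun j => ε ^ j * (mom μ j)⁻¹) {w z : ℂ} (hw : ‖w‖ ≤ ε) (hz : ‖z‖ ≤ 1) :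
    ‖Ker μ w z‖ ≤ ∑' j, ε ^ j * (mom μ j)⁻¹ :=
  tsum_of_norm_bounded hs.hasSum (ker_term_bd μ h hw hz)

lemma ker_meas {μ : Measure ℂ} (h : GoodMeas μ) {ε : ℝ}
    (hs : Summable fun j => ε ^ j * (mom μ j)⁻¹) {w : ℂ} (hw : ‖w‖ ≤ ε) :
    AEStronglyMeasurable (Ker μ w) μ := by
  refine aestronglyMeasurable_of_tendsto_ae (Filter.atTop : Filter ℕ)
    (f := fun N z => ∑ j ∈ Finset.range N, w ^ j * conj (z ^ j) * ((mom μ j)⁻¹ : ℝ)) ?_ ?_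
  · intro N
    exact Continuous.aestronglyMeasurable (by fun_prop)
  · filter_upwards [h.supp] with z hz
    exact (ker_hasSum h hs hw hz).tendsto_sum_nat

lemma cont_bd {μ : Measure ℂ} (h : SmallMeas μ) {n : ℕ} {F : (Fin n → ℂ) → ℂ}
    (hF : ContinuousOn F (polydisc n)) :
    (∃ C, ∀ᵐ z ∂(Measure.pi fun _ : Fin n => μ), ‖F z‖ ≤ C) ∧
      AEStronglyMeasurable F (Measure.pi fun _ : Fin n => μ) := by
  have := h.fin
  obtain ⟨ρ, h0, h1, hρ⟩ := h.supp'
  have hs := pi_supp h.fin hρ n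
  set K : Set (Fin n → ℂ) := Set.univ.pi fun _ => closedBall 0 ρ with hK
  have hKc : IsCompact K := isCompact_univ_pi fun _ => isCompact_closedBall _ _
  have hsub : K ⊆ polydisc n := by
    intro z hz i
    have := hz i (Set.mem_univ i)
    rw [mem_closedBall_zero_iff] at this
    exact this.trans_lt h1
  have hmem : ∀ᵐ z ∂(Measure.pi fun _ : Fin n => μ), z ∈ K := by
    filter_upwards [hs] with z hz i _
    rw [mem_closedBall_zero_iff]; exact hz i
  constructor
  · obtain ⟨C, hC⟩ := hKc.exists_bound_of_continuousOn (hF.mono hsub)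
    exact ⟨C, by filter_upwards [hmem] with z hz using hC z hz⟩
  · have := (hF.mono hsub).aestronglyMeasurable (μ := Measure.pi fun _ : Fin n => μ)
      hKc.measurableSet
    rwa [Measure.restrict_eq_self_of_ae_mem hmem] at this

lemma cont_bd1 {μ : Measure ℂ} (h : SmallMeas μ) {F : ℂ → ℂ}
    (hF : ContinuousOn F (ball 0 1)) :
    (∃ C, ∀ᵐ z ∂μ, ‖F z‖ ≤ C) ∧ AEStronglyMeasurable F μ := by
  have := h.fin
  obtain ⟨ρ, h0, h1, hρ⟩ := h.supp'
  have hKc : IsCompact (closedBall (0:ℂ) ρ) := isCompact_closedBall _ _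
  have hsub : closedBall (0:ℂ) ρ ⊆ ball 0 1 := closedBall_subset_ball h1
  have hmem : ∀ᵐ z ∂μ, z ∈ closedBall (0:ℂ) ρ := by
    filter_upwards [hρ] with z hz
    rwa [mem_closedBall_zero_iff]
  constructor
  · obtain ⟨C, hC⟩ := hKc.exists_bound_of_continuousOn (hF.mono hsub)
    exact ⟨C, by filter_upwards [hmem] with z hz using hC z hz⟩
  · have := (hF.mono hsub).aestronglyMeasurable (μ := μ) hKc.measurableSet
    rwa [Measure.restrict_eq_self_of_ae_mem hmem] at this

lemma repro1 {μ : Measure ℂ} (h : SmallMeas μ) {ε : ℝ} (hε : ε < 1)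
    (hs : Summable fun j => ε ^ j * (mom μ j)⁻¹) {f : ℂ → ℂ} (hf : DifferentiableOn ℂ f (ball 0 1))
    {w : ℂ} (hw : ‖w‖ ≤ ε) : ∫ z, f z * Ker μ w z ∂μ = f w := by
  have := h.fin
  set a : ℕ → ℂ := fun l => ((l.factorial : ℕ) : ℂ)⁻¹ * iteratedDeriv l f 0 with ha
  have hser : ∀ z : ℂ, ‖z‖ < 1 → HasSum (fun l => a l * z ^ l) (f z) := by
    intro z hz
    have := Complex.hasSum_taylorSeries_on_ball (c := 0) (r := 1) (f := f) (by simpa using hf)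
      (z := z) (by simpa using hz)
    have e : (fun l => a l * z ^ l) =
        fun n => ((n.factorial : ℕ) : ℂ)⁻¹ • (z - 0) ^ n • iteratedDeriv n f 0 := by
      funext l
      simp only [ha, sub_zero, smul_eq_mul]; ring
    rw [e]; exact this
  obtain ⟨⟨C, hC⟩, hm⟩ := cont_bd1 h hf.continuousOn
  obtain ⟨ρ, h0, h1, hρ⟩ := h.supp'
  have hco : ∀ j : ℕ, ∫ z, f z * conj (z ^ j) ∂μ = a j * mom μ j := by
    intro j
    have hsum := hasSum_int (ν := μ) (F := fun l z => a l * z ^ l * conj (z ^ j))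
      (f := fun z => f z * conj (z ^ j)) (fun l => ‖a l‖ * ρ ^ l)
      (fun l => Continuous.aestronglyMeasurable (by fun_prop)) (by
        intro l
        filter_upwards [hρ, h.supp] with z hz hz1
        rw [norm_mul, RCLike.norm_conj, norm_mul, norm_pow, norm_pow]
        refine (mul_le_of_le_one_right (by positivity) (pow_le_one₀ (norm_nonneg _) hz1)).trans ?_
        gcongr) (by
        have := (hser ρ (by rw [Complex.norm_real, Real.norm_of_nonneg h0.le]; exact h1)).summable.norm
        simpa [abs_of_pos h0] using this) (by
        filter_upwards [hρ] with z hz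
        exact (hser z (hz.trans_lt h1)).mul_right _)
    have hval : ∀ l, ∫ z, a l * z ^ l * conj (z ^ j) ∂μ = if l = j then a j * mom μ j else 0 := by
      intro l
      simp_rw [mul_assoc]
      rw [integral_const_mul, orth1 h.toGoodMeas]
      split_ifs with hlj
      · rw [hlj]
      · simp
    simp_rw [hval] at hsum
    exact hsum.unique (hasSum_ite_eq j _)
  have hsum := hasSum_int (ν := μ) (F := fun j z => f z * (w ^ j * conj (z ^ j) * ((mom μ j)⁻¹ : ℝ)))
      (f := fun z => f z * Ker μ w z) (fun j => C * (ε ^ j * (mom μ j)⁻¹))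
      (fun l => hm.mul (Continuous.aestronglyMeasurable (by fun_prop))) (by
        intro l
        filter_upwards [hC, h.supp] with z hz hz1
        rw [norm_mul]
        exact mul_le_mul hz (ker_term_bd μ h.toGoodMeas hw hz1 l) (norm_nonneg _)
          ((norm_nonneg _).trans hz)) (hs.mul_left C) (by
        filter_upwards [h.supp] with z hz
        exact (ker_hasSum h.toGoodMeas hs hw hz).mul_left _)
  have hval : ∀ j, ∫ z, f z * (w ^ j * conj (z ^ j) * ((mom μ j)⁻¹ : ℝ)) ∂μ = a j * w ^ j := by
    intro j
    have : ∀ z, f z * (w ^ j * conj (z ^ j) * ((mom μ j)⁻¹ : ℝ)) =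
      (w ^ j * ((mom μ j)⁻¹ : ℝ)) * (f z * conj (z ^ j)) := fun z => by ring
    simp_rw [this]
    rw [integral_const_mul, hco j]
    have : (mom μ j : ℂ) ≠ 0 := by exact_mod_cast (h.pos j).ne'
    push_cast
    field_simp
  simp_rw [hval] at hsum
  exact hsum.unique (hser w (hw.trans_lt hε))

lemma repron {μ : Measure ℂ} (h : SmallMeas μ) {ε : ℝ} (hε : ε < 1)
    (hs : Summable fun j => ε ^ j * (mom μ j)⁻¹) {n : ℕ} : ∀ {F : (Fin n → ℂ) → ℂ}
    (_ : DifferentiableOn ℂ F (polydisc n)) {w : Fin n → ℂ} (_ : ∀ i, ‖w i‖ ≤ ε),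
    ∫ z, F z * ∏ i, Ker μ (w i) (z i) ∂(Measure.pi fun _ : Fin n => μ) = F w := by
  have := h.fin
  induction n with
  | zero =>
    intro F hF w hw
    have : ∀ z, F z = F w := fun z => congrArg F (Subsingleton.elim _ _)
    simp_rw [this]
    rw [Measure.pi_of_empty (x := w)]
    simp
  | succ n ih =>
    intro F hF w hw
    obtain ⟨⟨C, hC⟩, hm⟩ := cont_bd h hF.continuousOn
    set B := ∑' j, ε ^ j * (mom μ j)⁻¹ with hB
    have hInt : Integrable (fun z => F z * ∏ i, Ker μ (w i) (z i))
        (Measure.pi fun _ : Fin (n+1) => μ) := by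
      refine Integrable.of_bound (C := C * ∏ i : Fin (n+1), B) ?_ ?_
      · refine hm.mul (Finset.aestronglyMeasurable_fun_prod _ fun i _ => ?_)
        exact (ker_meas h.toGoodMeas hs (hw i)).comp_quasiMeasurePreserving
          (Measure.quasiMeasurePreserving_eval (μ := fun _ : Fin (n+1) => μ) i)
      · filter_upwards [hC, pi_supp h.fin h.supp (n+1)] with z hz hz1
        rw [norm_mul, norm_prod]
        exact mul_le_mul hz (Finset.prod_le_prod (fun _ _ => norm_nonneg _)
          fun i _ => ker_bd h.toGoodMeas hs (hw i) (hz1 i))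
          (Finset.prod_nonneg fun _ _ => norm_nonneg _) ((norm_nonneg _).trans hz)
    have hmp := (measurePreserving_piFinSuccAbove (fun _ : Fin (n+1) => μ) 0).symm
    rw [← hmp.integral_comp']
    rw [← hmp.integrable_comp_emb (MeasurableEquiv.measurableEmbedding _)] at hInt
    refine (integral_prod _ hInt).trans ?_
    simp only [Function.comp_apply]
    have hin : ∀ᵐ z0 ∂μ, ∫ z', (F ((MeasurableEquiv.piFinSuccAbove (fun _ => ℂ) 0).symm (z0, z')) *
        ∏ i, Ker μ (w i) ((MeasurableEquiv.piFinSuccAbove (fun _ => ℂ) 0).symm (z0, z') i))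
        ∂(Measure.pi fun _ : Fin n => μ) = F (Fin.cons z0 (Fin.tail w)) * Ker μ (w 0) z0 := by
      obtain ⟨ρ, h0, h1, hρ⟩ := h.supp'
      filter_upwards [hρ] with z0 hz0
      have hd : DifferentiableOn ℂ (fun z' : Fin n → ℂ => F (Fin.cons z0 z')) (polydisc n) := by
        refine hF.comp (Differentiable.differentiableOn ?_) ?_
        · rw [differentiable_pi]
          intro i
          refine Fin.cases ?_ (fun i => ?_) i
          · simp
          · simp only [Fin.cons_succ]; fun_prop
        · intro z' hz' i
          refine Fin.cases ?_ (fun i => ?_) i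
          · simpa using hz0.trans_lt h1
          · simpa using hz' i
      have := ih hd (w := Fin.tail w) (fun i => hw _)
      rw [← this, ← integral_mul_const]
      congr 1
      ext z'
      have e1 : (MeasurableEquiv.piFinSuccAbove (fun _ => ℂ) 0).symm (z0, z') =
        (Fin.cons z0 z' : Fin (n+1) → ℂ) := by
        ext i; simp [MeasurableEquiv.piFinSuccAbove, Fin.insertNthEquiv]
      rw [e1, Fin.prod_univ_succ]
      simp only [Fin.cons_zero, Fin.cons_succ, Fin.tail]
      ring
    rw [integral_congr_ae hin]
    have hd : DifferentiableOn ℂ (fun z0 : ℂ => F (Fin.cons z0 (Fin.tail w))) (ball 0 1) := by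
      refine hF.comp (Differentiable.differentiableOn ?_) ?_
      · rw [differentiable_pi]
        intro i
        refine Fin.cases ?_ (fun i => ?_) i
        · simp
        · simp
      · intro z0 hz0 i
        refine Fin.cases ?_ (fun i => ?_) i
        · simpa using hz0
        · simpa [Fin.tail] using (hw i.succ).trans_lt hε
    rw [repro1 h hε hs hd (hw 0), Fin.cons_self_tail]

lemma ps_prod {𝕜 : Type*} [NormedField 𝕜] [CompleteSpace 𝕜] {ι : Type*} (s : Finset ι)
    (f : ι → PowerSeries 𝕜) (w : 𝕜)
    (hf : ∀ i ∈ s, Summable fun k => ‖PowerSeries.coeff k (f i) * w ^ k‖) :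
    (Summable fun k => ‖PowerSeries.coeff k (∏ i ∈ s, f i) * w ^ k‖) ∧
      ∑' k, PowerSeries.coeff k (∏ i ∈ s, f i) * w ^ k =
        ∏ i ∈ s, ∑' k, PowerSeries.coeff k (f i) * w ^ k := by
  classical
  induction s using Finset.induction_on with
  | empty =>
    simp only [Finset.prod_empty, PowerSeries.coeff_one]
    have : ∀ k : ℕ, (if k = 0 then (1:𝕜) else 0) * w ^ k = if k = 0 then 1 else 0 := by
      intro k; split_ifs with hk <;> simp [hk]
    simp_rw [this]
    refine ⟨?_, tsum_ite_eq 0 _⟩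
    exact summable_of_ne_finset_zero (s := {0}) (by intro b hb; simp at hb; simp [hb])
  | insert i s hi ih =>
    obtain ⟨h1, h2⟩ := ih fun j hj => hf j (Finset.mem_insert_of_mem hj)
    have h3 := hf i (Finset.mem_insert_self _ _)
    have hc : ∀ k, PowerSeries.coeff k (∏ j ∈ insert i s, f j) * w ^ k =
        ∑ kl ∈ Finset.HasAntidiagonal.antidiagonal k, (PowerSeries.coeff kl.1 (f i) * w ^ kl.1) *
          (PowerSeries.coeff kl.2 (∏ j ∈ s, f j) * w ^ kl.2) := by
      intro k
      rw [Finset.prod_insert hi, PowerSeries.coeff_mul, Finset.sum_mul]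
      refine Finset.sum_congr rfl fun kl hkl => ?_
      rw [← Finset.HasAntidiagonal.mem_antidiagonal.mp hkl, pow_add]; ring
    simp_rw [hc]
    refine ⟨summable_norm_sum_mul_antidiagonal_of_summable_norm
      (f := fun k => PowerSeries.coeff k (f i) * w ^ k)
      (g := fun k => PowerSeries.coeff k (∏ j ∈ s, f j) * w ^ k) h3 h1, ?_⟩
    rw [Finset.prod_insert hi, ← h2]
    rw [tsum_mul_tsum_eq_tsum_sum_antidiagonal_of_summable_norm
      (f := fun k => PowerSeries.coeff k (f i) * w ^ k)
      (g := fun k => PowerSeries.coeff k (∏ j ∈ s, f j) * w ^ k) h3 h1]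


/-- Coefficients of the restriction to the complex line in direction `x`. -/
def ccoef (μ : Measure ℂ) {n : ℕ} (F : (Fin n → ℂ) → ℂ) (x : Fin n → ℂ) (k : ℕ) : ℂ :=
  ∑ α ∈ Finset.finsuppAntidiag (Finset.univ : Finset (Fin n)) k, acoef μ F α * mono α x

/-- Squared norm of the coefficient functionals. -/
def SS (μ : Measure ℂ) {n : ℕ} (x : Fin n → ℂ) (k : ℕ) : ℝ :=
  ∑ α ∈ Finset.finsuppAntidiag (Finset.univ : Finset (Fin n)) k,
    (∏ i, mom μ (α i))⁻¹ * ‖mono α x‖ ^ 2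

lemma expand {μ : Measure ℂ} (h : SmallMeas μ) {n : ℕ} {F : (Fin n → ℂ) → ℂ}
    (hF : DifferentiableOn ℂ F (polydisc n)) {x : Fin n → ℂ} (hx : ∀ i, ‖x i‖ ≤ 1) :
    ∃ ε : ℝ, 0 < ε ∧ ∀ w : ℂ, ‖w‖ ≤ ε →
      HasSum (fun k => ccoef μ F x k * w ^ k) (F fun i => w * x i) := by
  have := h.fin
  have hg := h.toGoodMeas
  obtain ⟨M, R, hR, hM, hgr⟩ := h.growth
  set ε : ℝ := 1 / (2 * (R + 1)) with hεd
  have hε0 : 0 < ε := by positivity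
  have hε1 : ε < 1 := by
    rw [hεd, div_lt_one (by positivity)]; linarith
  have hεR : ε * R < 1 := by
    rw [hεd, div_mul_eq_mul_div, div_lt_one (by positivity)]; linarith
  have hs : Summable fun j => ε ^ j * (mom μ j)⁻¹ := by
    refine Summable.of_nonneg_of_le (fun j => mul_nonneg (by positivity) (inv_pos.mpr (h.pos j)).le)
      (fun j => ?_) ((summable_geometric_of_lt_one (by positivity) hεR).mul_left M)
    calc ε ^ j * (mom μ j)⁻¹ ≤ ε ^ j * (M * R ^ j) := by gcongr; exact hgr j
      _ = M * (ε * R) ^ j := by rw [mul_pow]; ring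
  refine ⟨ε, hε0, fun w hw => ?_⟩
  obtain ⟨⟨C, hC⟩, hm⟩ := cont_bd h hF.continuousOn
  have hwx : ∀ i, ‖w * x i‖ ≤ ε := fun i => by
    rw [norm_mul]; exact (mul_le_of_le_one_right (norm_nonneg _) (hx i)).trans hw
  rw [← repron h hε1 hs hF hwx]
  set Q : ℕ → (Fin n → ℂ) → ℂ := fun k z =>
    ∑ α ∈ Finset.finsuppAntidiag (Finset.univ : Finset (Fin n)) k,
      (((∏ i, mom μ (α i))⁻¹ : ℝ) : ℂ) * mono α x * conj (mono α z) with hQ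
  have hgs := (ps_prod (Finset.univ : Finset (Fin n))
    (fun _ => PowerSeries.mk fun j => (mom μ j)⁻¹) ε (fun i _ => by
      simp only [PowerSeries.coeff_mk]
      refine hs.norm.congr fun j => ?_
      rw [mul_comm])).1.of_norm
  simp only [PowerSeries.coeff_prod, PowerSeries.coeff_mk] at hgs
  have hbd : ∀ k (z : Fin n → ℂ), (∀ i, ‖z i‖ ≤ 1) → ‖Q k z * w ^ k‖ ≤
      (∑ α ∈ Finset.finsuppAntidiag (Finset.univ : Finset (Fin n)) k,
        ∏ i, (mom μ (α i))⁻¹) * ε ^ k := by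
    intro k z hz
    rw [norm_mul, norm_pow]
    refine mul_le_mul ?_ (pow_le_pow_left₀ (norm_nonneg _) hw k) (by positivity)
      (Finset.sum_nonneg fun α _ => Finset.prod_nonneg fun i _ => (inv_pos.mpr (h.pos _)).le)
    refine (norm_sum_le _ _).trans (Finset.sum_le_sum fun α _ => ?_)
    have hp : 0 < (∏ i, mom μ (α i))⁻¹ := inv_pos.mpr (Finset.prod_pos fun i _ => h.pos _)
    rw [norm_mul, norm_mul, RCLike.norm_conj, Complex.norm_real, Real.norm_of_nonneg hp.le,
      Finset.prod_inv_distrib, mul_assoc]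
    exact mul_le_of_le_one_right hp.le
      (mul_le_one₀ (mono_bd _ hx) (norm_nonneg _) (mono_bd _ hz))
  have hpt : ∀ z : Fin n → ℂ, (∀ i, ‖z i‖ ≤ 1) →
      HasSum (fun k => Q k z * w ^ k) (∏ i, Ker μ (w * x i) (z i)) := by
    intro z hz
    have hco : ∀ i k, PowerSeries.coeff k (PowerSeries.mk fun j =>
        (x i) ^ j * conj ((z i) ^ j) * (((mom μ j)⁻¹ : ℝ) : ℂ)) * w ^ k =
        (w * x i) ^ k * conj ((z i) ^ k) * (((mom μ k)⁻¹ : ℝ) : ℂ) := by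
      intro i k
      rw [PowerSeries.coeff_mk, mul_pow]; ring
    obtain ⟨p1, p2⟩ := ps_prod (Finset.univ : Finset (Fin n)) (fun i => PowerSeries.mk fun j =>
      (x i) ^ j * conj ((z i) ^ j) * (((mom μ j)⁻¹ : ℝ) : ℂ)) w (by
        intro i _
        simp_rw [hco]
        exact Summable.of_nonneg_of_le (fun _ => norm_nonneg _)
          (ker_term_bd μ hg (hwx i) (hz i)) hs)
    simp_rw [hco] at p2
    have p3 := p1.of_norm.hasSum
    rw [p2] at p3
    change HasSum _ (∏ i, ∑' j : ℕ, (w * x i) ^ j * conj ((z i) ^ j) * ((mom μ j)⁻¹ : ℝ))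
    refine Eq.mpr (congrArg (fun u => HasSum u _) (funext fun k => ?_)) p3
    rw [hQ, PowerSeries.coeff_prod]
    simp only [PowerSeries.coeff_mk]
    congr 1
    refine Finset.sum_congr rfl fun α _ => ?_
    simp only [Finset.prod_mul_distrib, mono, map_prod, ← Finset.prod_inv_distrib,
      Complex.ofReal_prod]
    ring
  have hQc : ∀ k, Continuous (Q k) := fun k => by
    rw [hQ]
    exact continuous_finsetSum _ fun α _ => continuous_const.mul
      (Complex.continuous_conj.comp (mono_meas _))
  have hsum := hasSum_int (ν := Measure.pi fun _ : Fin n => μ)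
    (F := fun k z => F z * (Q k z * w ^ k)) (f := fun z => F z * ∏ i, Ker μ (w * x i) (z i)) _
    (fun k => hm.mul ((hQc k).mul continuous_const).aestronglyMeasurable) (by
      intro k
      filter_upwards [hC, pi_supp h.fin h.supp n] with z hz hz1
      rw [norm_mul]
      exact mul_le_mul hz (hbd k z hz1) (norm_nonneg _) ((norm_nonneg _).trans hz))
    (hgs.mul_left C) (by
      filter_upwards [pi_supp h.fin h.supp n] with z hz
      exact (hpt z hz).mul_left _)
  convert hsum using 1
  ext k
  have hi : ∀ α : Fin n → ℕ, Integrable (fun z => F z * conj (mono α z))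
      (Measure.pi fun _ : Fin n => μ) := by
    intro α
    refine Integrable.of_bound (C := C) ?_ ?_
    · exact hm.mul (Complex.continuous_conj.comp (mono_meas _)).aestronglyMeasurable
    · filter_upwards [pi_supp h.fin h.supp n, hC] with z hz hz'
      rw [norm_mul, RCLike.norm_conj]
      exact (mul_le_of_le_one_right (norm_nonneg _) (mono_bd _ hz)).trans hz'
  have e1 : ∀ z, F z * (Q k z * w ^ k) =
      ∑ α ∈ Finset.finsuppAntidiag (Finset.univ : Finset (Fin n)) k,
        ((((∏ i, mom μ (α i))⁻¹ : ℝ) : ℂ) * mono α x * w ^ k) * (F z * conj (mono α z)) := by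
    intro z
    rw [hQ]
    simp only [Finset.sum_mul, Finset.mul_sum]
    exact Finset.sum_congr rfl fun α _ => by ring
  simp_rw [e1]
  rw [integral_finsetSum _ fun (α : Fin n →₀ ℕ) _ => (hi α).const_mul _, ccoef, Finset.sum_mul]
  refine Finset.sum_congr rfl fun α _ => ?_
  rw [integral_const_mul, acoef]; ring

lemma coef_unique {c d : ℕ → ℂ} {g : ℂ → ℂ} {ε : ℝ} (hε : 0 < ε)
    (hc : ∀ w : ℂ, ‖w‖ ≤ ε → HasSum (fun k => c k * w ^ k) (g w))
    (hd : ∀ w : ℂ, ‖w‖ ≤ ε → HasSum (fun k => d k * w ^ k) (g w)) : c = d := by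
  have key : ∀ c : ℕ → ℂ, (∀ w : ℂ, ‖w‖ ≤ ε → HasSum (fun k => c k * w ^ k) (g w)) →
      HasFPowerSeriesAt g (FormalMultilinearSeries.ofScalars ℂ c) 0 := by
    intro c hc
    rw [hasFPowerSeriesAt_iff]
    filter_upwards [Metric.closedBall_mem_nhds (0:ℂ) hε] with w hw
    have := hc w (by simpa using hw)
    simpa [FormalMultilinearSeries.coeff_ofScalars, mul_comm] using this
  have := (key c hc).eq_formalMultilinearSeries (key d hd)
  ext k
  have h2 := congrArg (fun p => FormalMultilinearSeries.coeff p k) this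
  simpa [FormalMultilinearSeries.coeff_ofScalars] using h2

lemma SS_nonneg {μ : Measure ℂ} (h : GoodMeas μ) {n : ℕ} (x : Fin n → ℂ) (k : ℕ) :
    0 ≤ SS μ x k :=
  Finset.sum_nonneg fun α _ => mul_nonneg
    (inv_pos.mpr (Finset.prod_pos fun i _ => h.pos _)).le (by positivity)

lemma main_small {μ : Measure ℂ} (h : SmallMeas μ) {n : ℕ} {F : (Fin n → ℂ) → ℂ}
    (hF : DifferentiableOn ℂ F (polydisc n)) (x : Fin n → ℂ) (K : ℕ) :
    ∑ k ∈ Finset.range K, ‖ccoef μ F x k‖ ^ 2 / SS μ x k ≤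
      ∫ z, ‖F z‖ ^ 2 ∂(Measure.pi fun _ : Fin n => μ) := by
  have hg := h.toGoodMeas
  obtain ⟨⟨C, hC⟩, hm⟩ := cont_bd h hF.continuousOn
  refine le_trans ?_ (bessel hg ((Finset.range K).sigma fun k =>
    Finset.finsuppAntidiag (Finset.univ : Finset (Fin n)) k) (fun p => p.2) ?_ F hm C hC)
  · rw [Finset.sum_sigma]
    refine Finset.sum_le_sum fun k _ => ?_
    have hp : ∀ α : Fin n →₀ ℕ, 0 < ∏ i, mom μ (α i) := fun α => Finset.prod_pos fun i _ => h.pos _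
    refine div_le_of_le_mul₀ (SS_nonneg hg x k)
      (Finset.sum_nonneg fun α _ => mul_nonneg (by positivity) (hp α).le) ?_
    have h1 : ‖ccoef μ F x k‖ ≤ ∑ α ∈ Finset.finsuppAntidiag (Finset.univ : Finset (Fin n)) k,
        ‖acoef μ F α‖ * ‖mono α x‖ :=
      (norm_sum_le _ _).trans (Finset.sum_le_sum fun α _ => (norm_mul _ _).le)
    refine (pow_le_pow_left₀ (norm_nonneg _) h1 2).trans ?_
    refine Finset.sum_sq_le_sum_mul_sum_of_sq_le_mul _ (fun α _ => mul_nonneg (by positivity)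
      (hp α).le) (fun α _ => mul_nonneg (inv_pos.mpr (hp α)).le (by positivity)) (fun α _ => ?_)
    have := (hp α).ne'
    apply le_of_eq
    field_simp
  · rintro ⟨k, α⟩ hp ⟨l, α'⟩ hq hh
    simp only [Finset.coe_sigma, Set.mem_sigma_iff, Finset.mem_coe,
      Finset.mem_finsuppAntidiag] at hp hq
    have : α = α' := DFunLike.coe_injective hh
    subst this
    have : k = l := by rw [← hp.2.1, ← hq.2.1]
    subst this
    rfl


/-- Radial weight function cut at radius `ρ`. -/
def wt (β ρ r : ℝ) : ℝ := if r < ρ then (β + 1) * (1 - r ^ 2) ^ β / Real.pi else 0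

/-- The one-variable measure, cut at radius `ρ`. -/
def AbM (β ρ : ℝ) : Measure ℂ := volume.withDensity fun z => ENNReal.ofReal (wt β ρ ‖z‖)

/-- The one-variable radial integrals. -/
def JJ (β ρ : ℝ) (k : ℕ) : ℝ := ∫ r in (0:ℝ)..ρ, r ^ (2 * k) * (r * (1 - r ^ 2) ^ β)

lemma wt_meas (β ρ : ℝ) : Measurable (wt β ρ) := by
  unfold wt
  refine Measurable.ite measurableSet_Iio ?_ measurable_const
  fun_prop

lemma wt_meas' (β ρ : ℝ) : Measurable fun z : ℂ => ENNReal.ofReal (wt β ρ ‖z‖) :=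
  ((wt_meas β ρ).comp measurable_norm).ennreal_ofReal

lemma wt_nonneg {β ρ r : ℝ} (hβ : -1 < β) (hρ : ρ ≤ 1) (hr : 0 ≤ r) : 0 ≤ wt β ρ r := by
  unfold wt
  split_ifs with h
  · have : 0 ≤ 1 - r ^ 2 := by nlinarith
    have := Real.rpow_nonneg this β
    have : 0 ≤ β + 1 := by linarith
    positivity
  · exact le_rfl

lemma hasDeriv_pow_aux {β r : ℝ} (hr : r ∈ Ioo (0:ℝ) 1) :
    HasDerivAt (fun r : ℝ => (1 - r ^ 2) ^ (β + 1)) (-(2 * (β + 1)) * (r * (1 - r ^ 2) ^ β)) r := by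
  have h1 : 0 < 1 - r ^ 2 := by nlinarith [hr.1, hr.2]
  have h2 : HasDerivAt (fun r : ℝ => 1 - r ^ 2) (-(2 * r)) r := by
    simpa using (hasDerivAt_pow 2 r).const_sub 1
  have h3 := h2.rpow_const (p := β + 1) (Or.inl h1.ne')
  convert h3 using 1
  rw [add_sub_cancel_right]; ring

lemma cont_pow_aux {β : ℝ} (hβ : -1 < β) : Continuous (fun r : ℝ => (1 - r ^ 2) ^ (β + 1)) := by
  refine Continuous.rpow_const (by fun_prop) fun r => Or.inr (by linarith)

lemma base_int {β : ℝ} (hβ : -1 < β) :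
    IntervalIntegrable (fun r : ℝ => r * (1 - r ^ 2) ^ β) volume 0 1 := by
  rw [intervalIntegrable_iff_integrableOn_Ioc_of_le zero_le_one]
  refine intervalIntegral.integrableOn_deriv_of_nonneg
    (g := fun r => -(2 * (β + 1))⁻¹ * (1 - r ^ 2) ^ (β + 1)) ?_ ?_ ?_
  · exact (continuous_const.mul (cont_pow_aux hβ)).continuousOn
  · intro r hr
    have := (hasDeriv_pow_aux (β := β) hr).const_mul (-(2 * (β + 1))⁻¹)
    refine this.congr_deriv ?_
    have : β + 1 ≠ 0 := by linarith
    field_simp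
  · intro r hr
    have : 0 ≤ 1 - r ^ 2 := by nlinarith [hr.1, hr.2]
    exact mul_nonneg hr.1.le (Real.rpow_nonneg this β)

lemma J_int {β : ℝ} (hβ : -1 < β) (k : ℕ) :
    IntervalIntegrable (fun r : ℝ => r ^ (2 * k) * (r * (1 - r ^ 2) ^ β)) volume 0 1 :=
  (base_int hβ).continuousOn_mul (by fun_prop)

lemma J_zero {β : ℝ} (hβ : -1 < β) : JJ β 1 0 = (2 * (β + 1))⁻¹ := by
  have h := intervalIntegral.integral_eq_sub_of_hasDerivAt_of_le (a := 0) (b := 1)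
    (f := fun r : ℝ => (1 - r ^ 2) ^ (β + 1)) zero_le_one (cont_pow_aux hβ).continuousOn
    (fun r hr => hasDeriv_pow_aux hr) ((base_int hβ).const_mul _)
  rw [intervalIntegral.integral_const_mul] at h
  have h1 : β + 1 ≠ 0 := by linarith
  simp [Real.zero_rpow h1] at h
  have hJ : JJ β 1 0 = ∫ r in (0:ℝ)..1, r * (1 - r ^ 2) ^ β := by simp [JJ]
  rw [hJ]
  field_simp
  linarith

lemma J_succ {β : ℝ} (hβ : -1 < β) (k : ℕ) :
    JJ β 1 (k + 1) * (β + 2 + k) = JJ β 1 k * (k + 1) := by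
  have h := intervalIntegral.integral_eq_sub_of_hasDerivAt_of_le (a := 0) (b := 1)
    (f := fun r : ℝ => r ^ (2 * k + 2) * (1 - r ^ 2) ^ (β + 1))
    (f' := fun r => (2 * k + 2) * (r ^ (2 * k) * (r * (1 - r ^ 2) ^ β)) +
      (-(2 * (β + 2 + k))) * (r ^ (2 * (k + 1)) * (r * (1 - r ^ 2) ^ β))) zero_le_one
    ((by fun_prop : Continuous fun r : ℝ => r ^ (2 * k + 2)).mul (cont_pow_aux hβ)).continuousOn
    (fun r hr => by
      have h1 : 0 < 1 - r ^ 2 := by nlinarith [hr.1, hr.2]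
      have := (hasDerivAt_pow (2 * k + 2) r).mul (hasDeriv_pow_aux (β := β) hr)
      refine HasDerivAt.congr_deriv (f := fun r : ℝ => r ^ (2 * k + 2) * (1 - r ^ 2) ^ (β + 1)) this ?_
      rw [Real.rpow_add h1, Real.rpow_one]
      push_cast
      ring)
    (((J_int hβ k).const_mul _).add ((J_int hβ (k+1)).const_mul _))
  rw [intervalIntegral.integral_add ((J_int hβ k).const_mul _) ((J_int hβ (k+1)).const_mul _),
    intervalIntegral.integral_const_mul, intervalIntegral.integral_const_mul] at h
  have h1 : β + 1 ≠ 0 := by linarith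
  simp only [one_pow, sub_self, Real.zero_rpow h1, mul_zero] at h
  rw [zero_pow (by lia)] at h
  change (2 * (k:ℝ) + 2) * JJ β 1 k + -(2 * (β + 2 + k)) * JJ β 1 (k + 1) = _ at h
  linarith

lemma J_pos {β : ℝ} (hβ : -1 < β) {ρ : ℝ} (h0 : 0 < ρ) (h1 : ρ ≤ 1) (k : ℕ) : 0 < JJ β ρ k := by
  refine intervalIntegral.intervalIntegral_pos_of_pos_on ((J_int hβ k).mono_set ?_) ?_ h0
  · rw [uIcc_of_le h0.le, uIcc_of_le zero_le_one]; exact Icc_subset_Icc_right h1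
  · intro r hr
    have : 0 < 1 - r ^ 2 := by nlinarith [hr.1, hr.2]
    have := Real.rpow_pos_of_pos this β
    have := hr.1
    positivity

lemma J_tendsto {β : ℝ} (hβ : -1 < β) (k : ℕ) :
    Filter.Tendsto (fun ρ => JJ β ρ k) (nhdsWithin 1 (Ioo 0 1)) (nhds (JJ β 1 k)) := by
  have h := intervalIntegral.continuousOn_primitive_interval' (J_int hβ k) (a := 0)
    (by simp)
  have h2 := h 1 (by simp)
  rw [uIcc_of_le zero_le_one] at h2
  exact h2.mono Ioo_subset_Icc_self

lemma J_growth {β : ℝ} (hβ : -1 < β) {ρ : ℝ} (h0 : 0 < ρ) (h1 : ρ ≤ 1) :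
    ∃ c > 0, ∀ k, c * ((ρ / 2) ^ 2) ^ k ≤ JJ β ρ k := by
  have sub1 : ∀ k, IntervalIntegrable (fun r : ℝ => r ^ (2 * k) * (r * (1 - r ^ 2) ^ β)) volume
      0 (ρ/2) := fun k => (J_int hβ k).mono_set (by
        rw [uIcc_of_le (by linarith), uIcc_of_le zero_le_one]; exact Icc_subset_Icc_right (by linarith))
  have sub2 : ∀ k, IntervalIntegrable (fun r : ℝ => r ^ (2 * k) * (r * (1 - r ^ 2) ^ β)) volume
      (ρ/2) ρ := fun k => (J_int hβ k).mono_set (by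
        rw [uIcc_of_le (by linarith), uIcc_of_le zero_le_one]
        exact Icc_subset_Icc (by linarith) (by linarith))
  have sub3 : IntervalIntegrable (fun r : ℝ => (r * (1 - r ^ 2) ^ β)) volume
      (ρ/2) ρ := (base_int hβ).mono_set (by
        rw [uIcc_of_le (by linarith), uIcc_of_le zero_le_one]
        exact Icc_subset_Icc (by linarith) (by linarith))
  have hnn : ∀ r ∈ Icc 0 ρ, 0 ≤ r * (1 - r ^ 2) ^ β := by
    intro r hr
    have : 0 ≤ 1 - r ^ 2 := by nlinarith [hr.1, hr.2]
    exact mul_nonneg hr.1 (Real.rpow_nonneg this β)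
  refine ⟨∫ r in (ρ/2)..ρ, r * (1 - r ^ 2) ^ β, ?_, fun k => ?_⟩
  · refine intervalIntegral.intervalIntegral_pos_of_pos_on sub3 ?_ (by linarith)
    intro r hr
    have hr0 : 0 < r := by linarith [hr.1]
    have : 0 < 1 - r ^ 2 := by nlinarith [hr.1, hr.2]
    have := Real.rpow_pos_of_pos this β
    positivity
  · rw [JJ, ← intervalIntegral.integral_add_adjacent_intervals (sub1 k) (sub2 k),
      ← intervalIntegral.integral_mul_const]
    have e1 : 0 ≤ ∫ r in (0:ℝ)..(ρ/2), r ^ (2 * k) * (r * (1 - r ^ 2) ^ β) := by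
      refine intervalIntegral.integral_nonneg (by linarith) fun r hr => ?_
      exact mul_nonneg (pow_nonneg hr.1 _) (hnn r ⟨hr.1, by linarith [hr.2]⟩)
    have e2 : ∫ r in (ρ/2)..ρ, r * (1 - r ^ 2) ^ β * ((ρ / 2) ^ 2) ^ k ≤
        ∫ r in (ρ/2)..ρ, r ^ (2 * k) * (r * (1 - r ^ 2) ^ β) := by
      refine intervalIntegral.integral_mono_on (by linarith) (sub3.mul_const _) (sub2 k) fun r hr => ?_
      rw [mul_comm, pow_mul]
      refine mul_le_mul_of_nonneg_right ?_ (hnn r ⟨by linarith [hr.1], hr.2⟩)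
      exact pow_le_pow_left₀ (by positivity) (pow_le_pow_left₀ (by positivity) hr.1 2) k
    linarith

lemma Ab_fin {β ρ : ℝ} (hβ : -1 < β) (h0 : 0 < ρ) (h1 : ρ ≤ 1) : IsFiniteMeasure (AbM β ρ) := by
  have hi : Integrable (fun z : ℂ => wt β ρ ‖z‖) := by
    have : IntegrableOn (fun z : ℂ => (fun r : ℝ => (β + 1) * (1 - r ^ 2) ^ β / Real.pi) ‖z‖)
        (ball (0:ℂ) ρ) := by
      refine (integrableOn_fun_norm_addHaar (volume : Measure ℂ) (f := fun r : ℝ => (β + 1) * (1 - r ^ 2) ^ β / Real.pi) (r := ρ)).mpr ?_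
      rw [Complex.finrank_real_complex]
      have h := (base_int hβ).const_mul ((β + 1) / Real.pi)
      rw [intervalIntegrable_iff_integrableOn_Ioo_of_le zero_le_one] at h
      refine (h.mono_set (Ioo_subset_Ioo_right h1)).congr_fun ?_ measurableSet_Ioo
      intro r hr
      simp only [smul_eq_mul]
      ring
    rw [← integrable_indicator_iff measurableSet_ball] at this
    refine this.congr (Filter.Eventually.of_forall fun z => ?_)
    simp [indicator, wt]
  exact isFiniteMeasure_withDensity_ofReal hi.2

lemma Ab_mom {β ρ : ℝ} (hβ : -1 < β) (h0 : 0 < ρ) (h1 : ρ ≤ 1) (k : ℕ) :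
    mom (AbM β ρ) k = 2 * (β + 1) * JJ β ρ k := by
  rw [mom, AbM, integral_withDensity_eq_integral_toReal_smul
    (wt_meas' β ρ) (by simp)]
  have e : ∀ z : ℂ, (ENNReal.ofReal (wt β ρ ‖z‖)).toReal • ‖z‖ ^ (2 * k) =
      (fun r : ℝ => wt β ρ r * r ^ (2 * k)) ‖z‖ := fun z => by
    rw [ENNReal.toReal_ofReal (wt_nonneg hβ h1 (norm_nonneg _)), smul_eq_mul]
  simp_rw [e]
  rw [integral_fun_norm_addHaar volume (fun r : ℝ => wt β ρ r * r ^ (2 * k)),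
    Complex.finrank_real_complex]
  have hv : (volume : Measure ℂ).real (ball 0 1) = Real.pi := by
    simp [Measure.real, Complex.volume_ball]
  have hI : ∫ y in Ioi (0:ℝ), y ^ (2 - 1) • (wt β ρ y * y ^ (2 * k)) =
      (β + 1) / Real.pi * JJ β ρ k := by
    rw [JJ, intervalIntegral.integral_of_le h0.le, integral_Ioc_eq_integral_Ioo,
      ← integral_const_mul, ← integral_indicator measurableSet_Ioi,
      ← integral_indicator measurableSet_Ioo]
    congr 1
    ext y
    by_cases hy : 0 < y <;> by_cases hy2 : y < ρ <;> simp [indicator, wt, hy, hy2]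
    ring
  rw [hI, hv]
  have := Real.pi_ne_zero
  simp only [nsmul_eq_mul, smul_eq_mul]
  push_cast
  field_simp

lemma Ab_rot (β ρ : ℝ) (u : ℂ) (hu : ‖u‖ = 1) : (AbM β ρ).map (fun z => u * z) = AbM β ρ := by
  have hmp : MeasurePreserving (fun z : ℂ => u * z) volume volume := by
    have := (rotation ⟨u, by simp [Submonoid.unitSphere, hu]⟩).measurePreserving
    exact this
  ext s hs
  rw [Measure.map_apply (by fun_prop) hs, AbM, withDensity_apply _ hs,
    withDensity_apply _ (hmp.measurable hs), ← lintegral_indicator hs,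
    ← lintegral_indicator (hmp.measurable hs)]
  rw [← hmp.lintegral_comp ((wt_meas' β ρ).indicator hs)]
  refine lintegral_congr fun z => ?_
  by_cases hz : u * z ∈ s <;> simp [indicator, hz, hu]

lemma Ab_supp (β ρ : ℝ) : ∀ᵐ z ∂(AbM β ρ), ‖z‖ < ρ := by
  rw [AbM, ae_withDensity_iff (wt_meas' β ρ)]
  refine Filter.Eventually.of_forall fun z hz => ?_
  by_contra hh
  exact hz (by simp [wt, hh])

lemma Ab_good {β ρ : ℝ} (hβ : -1 < β) (h0 : 0 < ρ) (h1 : ρ ≤ 1) : GoodMeas (AbM β ρ) where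
  fin := Ab_fin hβ h0 h1
  rot := Ab_rot β ρ
  supp := by filter_upwards [Ab_supp β ρ] with z hz using hz.le.trans h1
  pos k := by
    rw [Ab_mom hβ h0 h1]
    have := J_pos hβ h0 h1 k
    have : 0 < β + 1 := by linarith
    positivity

lemma Ab_small {β ρ : ℝ} (hβ : -1 < β) (h0 : 0 < ρ) (h1 : ρ < 1) : SmallMeas (AbM β ρ) where
  toGoodMeas := Ab_good hβ h0 h1.le
  supp' := ⟨ρ, h0, h1, by filter_upwards [Ab_supp β ρ] with z hz using hz.le⟩
  growth := by
    obtain ⟨c, hc, h⟩ := J_growth hβ h0 h1.le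
    have hb : 0 < β + 1 := by linarith
    refine ⟨(2 * (β + 1) * c)⁻¹, ((ρ / 2) ^ 2)⁻¹, by positivity, by positivity, fun k => ?_⟩
    rw [Ab_mom hβ h0 h1.le, inv_pow, ← mul_inv]
    refine inv_anti₀ (by positivity) ?_
    rw [mul_assoc]
    exact mul_le_mul_of_nonneg_left (h k) (by positivity)

lemma lint_prod (n : ℕ) (g : Fin n → ℂ → ℝ≥0∞) (hg : ∀ i, Measurable (g i)) :
    ∫⁻ z : Fin n → ℂ, ∏ i, g i (z i) = ∏ i, ∫⁻ z, g i z := by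
  induction n with
  | zero => simp [volume_pi, Measure.pi_of_empty (x := (0 : Fin 0 → ℂ))]
  | succ n ih =>
    have hmp := (volume_preserving_piFinSuccAbove (fun _ : Fin (n+1) => ℂ) 0).symm
    have hm : Measurable fun z : Fin (n+1) → ℂ => ∏ i, g i (z i) :=
      Finset.measurable_fun_prod _ fun i _ => (hg i).comp (measurable_pi_apply i)
    rw [← hmp.lintegral_comp hm]
    have e1 : ∀ p : ℂ × (Fin n → ℂ), (MeasurableEquiv.piFinSuccAbove (fun _ => ℂ) 0).symm p =
        (Fin.cons p.1 p.2 : Fin (n+1) → ℂ) := by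
      intro p
      ext i; simp [MeasurableEquiv.piFinSuccAbove, Fin.insertNthEquiv]
    simp_rw [e1, Fin.prod_univ_succ, Fin.cons_zero, Fin.cons_succ]
    rw [← ih (fun i => g i.succ) (fun i => hg _)]
    exact lintegral_prod_mul (hg 0).aemeasurable
      (Finset.measurable_fun_prod _ fun (i : Fin n) _ => (hg i.succ).comp (measurable_pi_apply i)).aemeasurable

lemma pi_Ab {β ρ : ℝ} (hβ : -1 < β) (h0 : 0 < ρ) (h1 : ρ ≤ 1) (n : ℕ) :
    (Measure.pi fun _ : Fin n => AbM β ρ) =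
      volume.withDensity fun z => ∏ i, ENNReal.ofReal (wt β ρ ‖z i‖) := by
  have := Ab_fin hβ h0 h1
  refine Measure.pi_eq fun s hs => ?_
  have hw := wt_meas' β ρ
  have hms : MeasurableSet (Set.univ.pi s) := MeasurableSet.univ_pi hs
  rw [withDensity_apply _ hms, ← lintegral_indicator hms]
  have e : ∀ z : Fin n → ℂ, (Set.univ.pi s).indicator
      (fun z => ∏ i, ENNReal.ofReal (wt β ρ ‖z i‖)) z =
      ∏ i, (s i).indicator (fun z => ENNReal.ofReal (wt β ρ ‖z‖)) (z i) := by
    intro z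
    by_cases hz : z ∈ Set.univ.pi s
    · rw [indicator_of_mem hz]
      exact Finset.prod_congr rfl fun i _ => by rw [indicator_of_mem (hz i (mem_univ i))]
    · rw [indicator_of_notMem hz]
      simp only [mem_pi, mem_univ, true_imp_iff, not_forall] at hz
      obtain ⟨i, hi⟩ := hz
      exact (Finset.prod_eq_zero (Finset.mem_univ i) (by rw [indicator_of_notMem hi])).symm
  simp_rw [e]
  rw [lint_prod n (fun i => (s i).indicator (fun z => ENNReal.ofReal (wt β ρ ‖z‖)))
    (fun i => hw.indicator (hs i))]
  refine Finset.prod_congr rfl fun i _ => ?_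
  rw [lintegral_indicator (hs i), AbM, withDensity_apply _ (hs i)]

lemma Vbeta_eq {β : ℝ} (hβ : -1 < β) (n : ℕ) :
    Vbeta n β = Measure.pi fun _ : Fin n => AbM β 1 := by
  rw [pi_Ab hβ one_pos le_rfl, Vbeta]
  have hm : MeasurableSet (polydisc n) := by
    have : polydisc n = ⋂ j, {z : Fin n → ℂ | ‖z j‖ < 1} := by ext; simp [polydisc]
    rw [this]
    exact MeasurableSet.iInter fun j => measurableSet_lt (by fun_prop) measurable_const
  rw [← withDensity_indicator hm]
  congr 1
  ext z
  by_cases hz : z ∈ polydisc n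
  · rw [indicator_of_mem hz, ENNReal.ofReal_prod_of_nonneg]
    · exact Finset.prod_congr rfl fun i _ => by rw [wt, if_pos (hz i)]
    · intro i _
      have := wt_nonneg hβ (le_refl 1) (norm_nonneg (z i))
      rwa [wt, if_pos (hz i)] at this
  · rw [indicator_of_notMem hz]
    simp only [polydisc, mem_ofPred_eq, not_forall] at hz
    obtain ⟨i, hi⟩ := hz
    exact (Finset.prod_eq_zero (Finset.mem_univ i) (by rw [wt, if_neg hi]; simp)).symm

lemma pi_mono {β ρ : ℝ} (hβ : -1 < β) (h0 : 0 < ρ) (h1 : ρ ≤ 1) (n : ℕ) :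
    (Measure.pi fun _ : Fin n => AbM β ρ) ≤ Vbeta n β := by
  rw [Vbeta_eq hβ, pi_Ab hβ h0 h1, pi_Ab hβ one_pos le_rfl]
  refine withDensity_mono (Filter.Eventually.of_forall fun z => ?_)
  refine Finset.prod_le_prod' fun i _ => ENNReal.ofReal_le_ofReal ?_
  by_cases h : ‖z i‖ < ρ
  · rw [wt, if_pos h, wt, if_pos (h.trans_le h1)]
  · rw [wt, if_neg h]
    exact wt_nonneg hβ le_rfl (norm_nonneg _)

/-- The coefficients of `(1 - X) ^ (-s)`. -/
def dd (s : ℝ) (k : ℕ) : ℝ := ∏ i ∈ Finset.range k, (s + i) / (i + 1)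

lemma dd_succ (s : ℝ) (k : ℕ) : (k + 1) * dd s (k + 1) = (s + k) * dd s k := by
  rw [dd, Finset.prod_range_succ, ← dd]
  have : (k + 1 : ℝ) ≠ 0 := by positivity
  field_simp

lemma dd_pos {s : ℝ} (hs : 0 < s) (k : ℕ) : 0 < dd s k :=
  Finset.prod_pos fun i _ => by positivity

lemma dd_vand (a b : ℝ) (k : ℕ) :
    ∑ p ∈ Finset.HasAntidiagonal.antidiagonal k, dd a p.1 * dd b p.2 = dd (a + b) k := by
  induction k with
  | zero => simp [dd]
  | succ k ih =>
    have hk : (k + 1 : ℝ) ≠ 0 := by positivity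
    refine mul_left_cancel₀ hk ?_
    rw [dd_succ, ← ih, Finset.mul_sum, Finset.mul_sum]
    have e : ∀ p ∈ Finset.HasAntidiagonal.antidiagonal (k + 1), ((k:ℝ) + 1) * (dd a p.1 * dd b p.2) =
        (p.1 * dd a p.1) * dd b p.2 + dd a p.1 * (p.2 * dd b p.2) := by
      intro p hp
      have : (p.1 : ℝ) + p.2 = k + 1 := by
        have := Finset.HasAntidiagonal.mem_antidiagonal.mp hp
        exact_mod_cast this
      rw [← this]; ring
    rw [Finset.sum_congr rfl e, Finset.sum_add_distrib, Finset.Nat.sum_antidiagonal_succ,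
      Finset.Nat.sum_antidiagonal_succ']
    simp only [Nat.cast_zero, zero_mul, mul_zero, zero_add, Nat.cast_add, Nat.cast_one, dd_succ]
    rw [← Finset.sum_add_distrib]
    refine Finset.sum_congr rfl fun p hp => ?_
    have : (p.1 : ℝ) + p.2 = k := by
      have := Finset.HasAntidiagonal.mem_antidiagonal.mp hp
      exact_mod_cast this
    rw [← this]; ring

/-- The generating power series of `dd`. -/
def Dser (s : ℝ) : PowerSeries ℝ := PowerSeries.mk (dd s)

lemma Dser_pow (s : ℝ) (m : ℕ) : Dser s ^ m = Dser (m * s) := by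
  induction m with
  | zero =>
    ext k
    cases k with
    | zero => simp [Dser, dd]
    | succ k => simp [Dser, dd, Finset.prod_range_succ', PowerSeries.coeff_one]
  | succ m ih =>
    rw [pow_succ, ih]
    ext k
    rw [PowerSeries.coeff_mul]
    simp only [Dser, PowerSeries.coeff_mk, dd_vand]
    push_cast
    ring_nf

/-- The direction vector. -/
def xv (n : ℕ) (i : Fin n) : ℂ := if (i : ℕ) < n - 1 then 1 else 0

lemma mom_one {β : ℝ} (hβ : -1 < β) (k : ℕ) : mom (AbM β 1) k = (dd (β + 2) k)⁻¹ := by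
  have hb : β + 1 ≠ 0 := by linarith
  rw [Ab_mom hβ one_pos le_rfl]
  induction k with
  | zero => rw [J_zero hβ]; simp [dd]; field_simp
  | succ k ih =>
    have h1 : 0 < β + 2 + k := by linarith [(Nat.cast_nonneg k : (0:ℝ) ≤ k)]
    have h2 := dd_pos (s := β + 2) (by linarith) k
    have h3 := dd_pos (s := β + 2) (by linarith) (k+1)
    have h4 := dd_succ (β + 2) k
    have h5 := J_succ hβ k
    have h6 : 2 * (β + 1) * JJ β 1 k * dd (β + 2) k = 1 := by rw [ih]; field_simp
    refine eq_inv_of_mul_eq_one_left ?_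
    have hk : (k + 1 : ℝ) ≠ 0 := by positivity
    refine mul_left_cancel₀ (mul_ne_zero hk h1.ne') ?_
    calc _ = 2 * (β + 1) * (JJ β 1 (k+1) * (β + 2 + k)) * ((k+1) * dd (β+2) (k+1)) := by ring
      _ = (2 * (β + 1) * JJ β 1 k * dd (β + 2) k) * ((k + 1) * (β + 2 + k)) := by
        rw [h4, h5]; ring
      _ = _ := by rw [h6]; ring

lemma SS_one {β : ℝ} (hβ : -1 < β) (m : ℕ) (k : ℕ) :
    SS (AbM β 1) (xv (m + 1)) k = dd (m * (β + 2)) k := by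
  have h1 : SS (AbM β 1) (xv (m + 1)) k = PowerSeries.coeff k
      (∏ i : Fin (m + 1), PowerSeries.mk fun j => dd (β + 2) j * ‖xv (m + 1) i‖ ^ (2 * j)) := by
    rw [PowerSeries.coeff_prod, SS]
    refine Finset.sum_congr rfl fun α _ => ?_
    simp only [PowerSeries.coeff_mk, mono, norm_prod, norm_pow, mom_one hβ]
    rw [← Finset.prod_inv_distrib, ← Finset.prod_pow, ← Finset.prod_mul_distrib]
    refine Finset.prod_congr rfl fun i _ => ?_
    rw [inv_inv, ← pow_mul, mul_comm (α i)]
  rw [h1, Fin.prod_univ_castSucc]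
  have h2 : ∀ i : Fin m, (PowerSeries.mk fun j => dd (β + 2) j * ‖xv (m + 1) i.castSucc‖ ^ (2 * j)) =
      Dser (β + 2) := fun i => by
    ext j; simp [xv, Dser]
  have h3 : (PowerSeries.mk fun j => dd (β + 2) j * ‖xv (m + 1) (Fin.last m)‖ ^ (2 * j)) = 1 := by
    ext j
    cases j with
    | zero => simp [dd]
    | succ j => simp [xv, PowerSeries.coeff_one]
  rw [h3, mul_one]
  simp only [h2]
  rw [Finset.prod_const, Finset.card_univ, Fintype.card_fin, Dser_pow, Dser, PowerSeries.coeff_mk]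

lemma dd_gamma {s : ℝ} (hs : 0 < s) (k : ℕ) :
    dd s (k + 1) * (Real.GammaSeq s k * (k + 1)) = (k : ℝ) ^ s := by
  rw [dd, Finset.prod_div_distrib, Real.GammaSeq]
  have h : ∏ i ∈ Finset.range (k + 1), ((i : ℝ) + 1) = (k + 1) * (k.factorial : ℝ) := by
    rw [← Finset.prod_range_add_one_eq_factorial, Finset.prod_range_succ]
    push_cast; ring
  have h2 : ∏ i ∈ Finset.range (k + 1), (s + (i : ℝ)) ≠ 0 :=
    (Finset.prod_pos fun i _ => by positivity).ne'
  have h3 : (k.factorial : ℝ) ≠ 0 := by positivity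
  have hk : (k + 1 : ℝ) ≠ 0 := by positivity
  rw [h]
  field_simp

lemma T_lim {s : ℝ} (hs : 0 < s) {m : ℕ} (hm : 1 ≤ m) : ∃ L > 0, Filter.Tendsto
    (fun k : ℕ => dd (m * s) (k + 1) / dd s (k + 1) ^ (m + 1) * (k : ℝ) ^ (s - m))
    Filter.atTop (nhds L) := by
  have hms : 0 < m * s := by positivity
  refine ⟨Real.Gamma s ^ (m + 1) / Real.Gamma (m * s) * 1 ^ m, ?_, ?_⟩
  · have := Real.Gamma_pos_of_pos hs
    have := Real.Gamma_pos_of_pos hms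
    positivity
  have h1 := ((Real.GammaSeq_tendsto_Gamma s).pow (m + 1)).div
    (Real.GammaSeq_tendsto_Gamma (m * s)) (Real.Gamma_pos_of_pos hms).ne'
  have h2 : Filter.Tendsto (fun k : ℕ => ((k : ℝ) + 1) / k) Filter.atTop (nhds 1) := by
    have := (tendsto_const_nhds (x := (1:ℝ))).add (tendsto_one_div_atTop_nhds_zero_nat (𝕜 := ℝ))
    rw [add_zero] at this
    refine this.congr' ?_
    filter_upwards [Filter.eventually_gt_atTop 0] with k hk
    have : (k : ℝ) ≠ 0 := by positivity
    field_simp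
  refine (h1.mul (h2.pow m)).congr' ?_
  filter_upwards [Filter.eventually_gt_atTop 0] with k hk
  have hk' : 0 < (k : ℝ) := by positivity
  have d1 := dd_gamma hs k
  have d2 := dd_gamma hms k
  have p1 := dd_pos hs (k + 1)
  have p2 := dd_pos hms (k + 1)
  have e1 : Real.GammaSeq s k = (k : ℝ) ^ s / (dd s (k + 1) * (k + 1)) := by
    rw [_root_.eq_div_iff (by positivity)]; linarith
  have e2 : Real.GammaSeq (m * s) k = ((k : ℝ) ^ s) ^ m / (dd (m * s) (k + 1) * (k + 1)) := by
    rw [_root_.eq_div_iff (by positivity), ← Real.rpow_mul_natCast hk'.le, mul_comm s]; linarith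
  have q := Real.rpow_pos_of_pos hk' s
  simp only [Pi.div_apply]
  rw [e1, e2, Real.rpow_sub hk', Real.rpow_natCast, div_pow, div_pow, mul_pow]
  field_simp
  ring

lemma T_bdd {s : ℝ} (hs : 0 < s) {m : ℕ} (hm : 1 ≤ m) (h : (m : ℝ) ≤ s) :
    ∃ C > 0, ∀ k, dd (m * s) k / dd s k ^ (m + 1) ≤ C := by
  obtain ⟨L, hL, hT⟩ := T_lim hs hm
  have hev : ∀ᶠ k : ℕ in Filter.atTop, dd (m * s) (k + 1) / dd s (k + 1) ^ (m + 1) ≤ L + 1 := by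
    filter_upwards [hT.eventually_le_const (lt_add_one L), Filter.eventually_ge_atTop 1] with k hk hk1
    refine le_trans ?_ hk
    refine le_mul_of_one_le_right (div_nonneg (dd_pos (by positivity) _).le
      (pow_nonneg (dd_pos hs _).le _)) ?_
    exact Real.one_le_rpow (by exact_mod_cast hk1) (by linarith)
  have hb : BddAbove (range fun k : ℕ => dd (m * s) (k + 1) / dd s (k + 1) ^ (m + 1)) :=
    Filter.IsBoundedUnder.bddAbove_range ⟨L + 1, by simpa using hev⟩
  obtain ⟨C, hC⟩ := hb
  refine ⟨max C 1, by positivity, fun k => ?_⟩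
  cases k with
  | zero => simp [dd]
  | succ k => exact (hC ⟨k, rfl⟩).trans (le_max_left _ _)

lemma T_nec {s : ℝ} (hs : 0 < s) {m : ℕ} (hm : 1 ≤ m) {C : ℝ}
    (h : ∀ k, dd (m * s) k / dd s k ^ (m + 1) ≤ C) : (m : ℝ) ≤ s := by
  by_contra! hlt
  obtain ⟨L, hL, hT⟩ := T_lim hs hm
  have h0 : Filter.Tendsto (fun k : ℕ => C * (k : ℝ) ^ (s - m)) Filter.atTop (nhds (C * 0)) := by
    refine Filter.Tendsto.const_mul C ?_
    have := (tendsto_rpow_neg_atTop (y := m - s) (by linarith)).comp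
      (tendsto_natCast_atTop_atTop (R := ℝ))
    simpa [Function.comp_def] using this
  have := le_of_tendsto_of_tendsto' hT h0 fun k =>
    mul_le_mul_of_nonneg_right (h (k + 1)) (by positivity)
  linarith

lemma poly_lint {β : ℝ} (hβ : -1 < β) {n : ℕ} {κ : Type*} (A : Finset κ)
    (e : κ → Fin n → ℕ) (he : Set.InjOn e A) (b : κ → ℂ) :
    ∫⁻ z, ENNReal.ofReal (‖∑ k ∈ A, b k * mono (e k) z‖ ^ 2) ∂(Vbeta n β) =
      ENNReal.ofReal (∑ k ∈ A, ‖b k‖ ^ 2 * ∏ i, mom (AbM β 1) (e k i)) := by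
  have hg := Ab_good hβ one_pos le_rfl
  have := hg.fin
  rw [Vbeta_eq hβ, ← norm_sum hg A e he b, ofReal_integral_eq_lintegral_ofReal]
  · have hc : Continuous fun z : Fin n → ℂ => ‖∑ k ∈ A, b k * mono (e k) z‖ ^ 2 :=
      ((continuous_finsetSum _ fun k _ => continuous_const.mul (mono_meas (e k))).norm).pow 2
    refine Integrable.of_bound (C := (∑ k ∈ A, ‖b k‖) ^ 2) hc.aestronglyMeasurable ?_
    filter_upwards [pi_supp this hg.supp n] with z hz
    rw [Real.norm_of_nonneg (by positivity)]
    refine pow_le_pow_left₀ (norm_nonneg _) ?_ 2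
    refine (norm_sum_le _ _).trans (Finset.sum_le_sum fun k _ => ?_)
    rw [norm_mul]
    exact mul_le_of_le_one_right (norm_nonneg _) (mono_bd _ hz)
  · exact Filter.Eventually.of_forall fun z => by positivity

lemma xv_norm (n : ℕ) (i : Fin n) : ‖xv n i‖ ≤ 1 := by
  unfold xv; split_ifs <;> simp

lemma taylor_xv {n : ℕ} {F : (Fin n → ℂ) → ℂ} (hF : DifferentiableOn ℂ F (polydisc n)) :
    ∃ c : ℕ → ℂ, ∀ w : ℂ, ‖w‖ < 1 →
      HasSum (fun k => c k * w ^ k) (F fun i => w * xv n i) := by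
  have hd : DifferentiableOn ℂ (fun w : ℂ => F fun i => w * xv n i) (ball 0 1) := by
    refine hF.comp (g := F) (f := fun (w : ℂ) (i : Fin n) => w * xv n i) (t := polydisc n)
      (Differentiable.differentiableOn (by fun_prop)) ?_
    intro w hw i
    rw [norm_mul]
    exact (mul_le_of_le_one_right (norm_nonneg _) (xv_norm n i)).trans_lt (by simpa using hw)
  refine ⟨fun k => (k.factorial : ℂ)⁻¹ * iteratedDeriv k (fun w : ℂ => F fun i => w * xv n i) 0,
    fun w hw => ?_⟩
  have h := Complex.hasSum_taylorSeries_on_ball hd (z := w) (by simpa using hw)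
  refine Eq.mpr (congrArg (fun u => HasSum u _) (funext fun k => ?_)) h
  simp only [sub_zero, smul_eq_mul]
  ring

lemma SS_tendsto {β : ℝ} (hβ : -1 < β) {n : ℕ} (x : Fin n → ℂ) (k : ℕ) :
    Filter.Tendsto (fun ρ => SS (AbM β ρ) x k) (nhdsWithin 1 (Ioo 0 1))
      (nhds (SS (AbM β 1) x k)) := by
  unfold SS
  refine tendsto_finsetSum _ fun α _ => Filter.Tendsto.mul_const _ (Filter.Tendsto.inv₀ ?_ ?_)
  · refine tendsto_finsetProd _ fun i _ => ?_
    rw [Ab_mom hβ one_pos le_rfl]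
    refine ((J_tendsto hβ (α i)).const_mul (2 * (β + 1))).congr' ?_
    filter_upwards [self_mem_nhdsWithin] with ρ hρ
    rw [Ab_mom hβ hρ.1 hρ.2.le]
  · exact (Finset.prod_pos fun i _ => (Ab_good hβ one_pos le_rfl).pos _).ne'

lemma coef_bound {β : ℝ} (hβ : -1 < β) {m : ℕ} (hm : 1 ≤ m) {F : (Fin (m + 1) → ℂ) → ℂ}
    (hF : DifferentiableOn ℂ F (polydisc (m + 1))) {c : ℕ → ℂ}
    (hc : ∀ w : ℂ, ‖w‖ < 1 → HasSum (fun k => c k * w ^ k) (F fun i => w * xv (m + 1) i)) (K : ℕ) :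
    ENNReal.ofReal (∑ k ∈ Finset.range K, ‖c k‖ ^ 2 / dd (m * (β + 2)) k) ≤
      ∫⁻ z, ENNReal.ofReal (‖F z‖ ^ 2) ∂(Vbeta (m + 1) β) := by
  have hne : (nhdsWithin (1:ℝ) (Ioo 0 1)).NeBot := right_nhdsWithin_Ioo_neBot one_pos
  have hs : 0 < β + 2 := by linarith
  have ht : Filter.Tendsto (fun ρ => ENNReal.ofReal
      (∑ k ∈ Finset.range K, ‖c k‖ ^ 2 / SS (AbM β ρ) (xv (m + 1)) k)) (nhdsWithin 1 (Ioo 0 1))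
      (nhds (ENNReal.ofReal (∑ k ∈ Finset.range K, ‖c k‖ ^ 2 / dd (m * (β + 2)) k))) := by
    refine ENNReal.tendsto_ofReal (tendsto_finsetSum _ fun k _ => ?_)
    have := SS_tendsto hβ (xv (m + 1)) k
    rw [SS_one hβ] at this
    exact tendsto_const_nhds.div this (dd_pos (by positivity) k).ne'
  refine le_of_tendsto ht ?_
  filter_upwards [self_mem_nhdsWithin] with ρ hρ
  have hsm := Ab_small hβ hρ.1 hρ.2
  have := hsm.fin
  obtain ⟨ε, hε, hex⟩ := expand hsm hF (xv_norm (m + 1))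
  have hcc : ccoef (AbM β ρ) F (xv (m + 1)) = c :=
    coef_unique (g := fun w => F fun i => w * xv (m + 1) i) (ε := min ε (1/2)) (by positivity)
      (fun w hw => hex w (hw.trans (min_le_left _ _)))
      (fun w hw => hc w ((hw.trans (min_le_right _ _)).trans_lt (by norm_num)))
  have h1 := main_small hsm hF (xv (m + 1)) K
  rw [hcc] at h1
  refine (ENNReal.ofReal_le_ofReal h1).trans ?_
  rw [integral_eq_lintegral_of_nonneg_ae (f := fun z => ‖F z‖ ^ 2) (Filter.Eventually.of_forall fun z => by positivity)
    ((cont_bd hsm hF.continuousOn).2.norm.pow 2)]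
  exact ENNReal.ofReal_toReal_le.trans (lintegral_mono' (pi_mono hβ hρ.1 hρ.2.le _) le_rfl)

lemma Vbeta_supp (n : ℕ) (β : ℝ) : ∀ᵐ z ∂(Vbeta n β), z ∈ polydisc n := by
  have hm : MeasurableSet (polydisc n) := by
    have : polydisc n = ⋂ j, {z : Fin n → ℂ | ‖z j‖ < 1} := by ext; simp [polydisc]
    rw [this]
    exact MeasurableSet.iInter fun j => measurableSet_lt (by fun_prop) measurable_const
  exact (withDensity_absolutelyContinuous _ _).ae_le (ae_restrict_mem hm)

lemma prod_lt {m : ℕ} {z : Fin (m + 1) → ℂ} (hz : z ∈ polydisc (m + 1)) : ‖∏ j, z j‖ < 1 := by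
  rw [Fin.prod_univ_succ, norm_mul, norm_prod]
  have h1 : ∏ i : Fin m, ‖z i.succ‖ ≤ 1 :=
    Finset.prod_le_one (fun _ _ => norm_nonneg _) fun i _ => (hz i.succ).le
  exact (mul_le_of_le_one_right (norm_nonneg _) h1).trans_lt (hz 0)

lemma suff {β : ℝ} (hβ : -1 < β) {m : ℕ} (hm : 1 ≤ m) (h : (m : ℝ) ≤ β + 2) :
    ∃ C > (0:ℝ), ∀ F : (Fin (m + 1) → ℂ) → ℂ, DifferentiableOn ℂ F (polydisc (m + 1)) →
    ∫⁻ z, ENNReal.ofReal (‖F fun i => (∏ j, z j) * xv (m + 1) i‖ ^ 2) ∂(Vbeta (m + 1) β) ≤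
      ENNReal.ofReal C * ∫⁻ z, ENNReal.ofReal (‖F z‖ ^ 2) ∂(Vbeta (m + 1) β) := by
  have hs : 0 < β + 2 := by linarith
  obtain ⟨C, hC, hT⟩ := T_bdd hs hm h
  refine ⟨C, hC, fun F hF => ?_⟩
  obtain ⟨c, hc⟩ := taylor_xv hF
  set p : ℕ → (Fin (m + 1) → ℂ) → ℂ := fun K z =>
    ∑ k ∈ Finset.range K, c k * mono (fun _ => k) z with hp
  have hpc : ∀ K, Continuous (p K) := fun K =>
    continuous_finsetSum _ fun k _ => continuous_const.mul (mono_meas _)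
  have hpK : ∀ K, ∫⁻ z, ENNReal.ofReal (‖p K z‖ ^ 2) ∂(Vbeta (m + 1) β) ≤
      ENNReal.ofReal C * ∫⁻ z, ENNReal.ofReal (‖F z‖ ^ 2) ∂(Vbeta (m + 1) β) := by
    intro K
    rw [hp, poly_lint hβ (Finset.range K) (fun k _ => k) (fun a _ b _ hab => congrFun hab 0) c]
    refine le_trans ?_ (mul_le_mul_right (coef_bound hβ hm hF hc K) (ENNReal.ofReal C))
    rw [← ENNReal.ofReal_mul hC.le]
    refine ENNReal.ofReal_le_ofReal ?_
    rw [Finset.mul_sum]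
    refine Finset.sum_le_sum fun k _ => ?_
    have d1 := dd_pos hs k
    have d2 : 0 < dd (m * (β + 2)) k := dd_pos (by positivity) k
    have h3 : ((dd (β + 2) k)⁻¹) ^ (m + 1) ≤ C / dd (m * (β + 2)) k := by
      rw [_root_.le_div_iff₀ d2]
      calc _ = dd (m * (β + 2)) k / dd (β + 2) k ^ (m + 1) := by rw [inv_pow]; field_simp
        _ ≤ C := hT k
    simp only [mom_one hβ, Finset.prod_const, Finset.card_univ, Fintype.card_fin]
    calc _ ≤ ‖c k‖ ^ 2 * (C / dd (m * (β + 2)) k) := mul_le_mul_of_nonneg_left h3 (by positivity)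
      _ = _ := by ring
  have hlim : ∀ᵐ z ∂(Vbeta (m + 1) β),
      ENNReal.ofReal (‖F fun i => (∏ j, z j) * xv (m + 1) i‖ ^ 2) =
        Filter.liminf (fun K => ENNReal.ofReal (‖p K z‖ ^ 2)) Filter.atTop := by
    filter_upwards [Vbeta_supp (m + 1) β] with z hz
    refine (Filter.Tendsto.liminf_eq ?_).symm
    refine ENNReal.tendsto_ofReal (Filter.Tendsto.pow (Filter.Tendsto.norm ?_) 2)
    have := (hc _ (prod_lt hz)).tendsto_sum_nat
    simpa only [hp, mono, Finset.prod_pow] using this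
  rw [lintegral_congr_ae hlim]
  refine (lintegral_liminf_le fun K => ?_).trans ?_
  · exact (((hpc K).norm.pow 2).measurable).ennreal_ofReal
  · refine Filter.liminf_le_of_le (by isBoundedDefault) fun b hb => ?_
    obtain ⟨K, hK⟩ := hb.exists
    exact hK.trans (hpK K)

lemma mono_smul {n k : ℕ} {α : Fin n →₀ ℕ}
    (hα : α ∈ Finset.finsuppAntidiag (Finset.univ : Finset (Fin n)) k) (w : ℂ) (x : Fin n → ℂ) :
    mono α (fun i => w * x i) = w ^ k * mono α x := by
  have h : ∑ i, α i = k := (Finset.mem_finsuppAntidiag.mp hα).1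
  simp only [mono, mul_pow, Finset.prod_mul_distrib, Finset.prod_pow_eq_pow_sum, h]

lemma nec {β : ℝ} (hβ : -1 < β) {m : ℕ} (hm : 1 ≤ m) {C : ℝ} (hC : 0 < C)
    (h : ∀ F : (Fin (m + 1) → ℂ) → ℂ, DifferentiableOn ℂ F (polydisc (m + 1)) →
    ∫⁻ z, ENNReal.ofReal (‖F fun i => (∏ j, z j) * xv (m + 1) i‖ ^ 2) ∂(Vbeta (m + 1) β) ≤
      ENNReal.ofReal C * ∫⁻ z, ENNReal.ofReal (‖F z‖ ^ 2) ∂(Vbeta (m + 1) β)) :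
    (m : ℝ) ≤ β + 2 := by
  have hs : 0 < β + 2 := by linarith
  have hg := Ab_good hβ one_pos le_rfl
  refine T_nec hs hm (C := C) fun k => ?_
  set x := xv (m + 1) with hx
  set S := SS (AbM β 1) x k with hS
  have hSd : S = dd (m * (β + 2)) k := SS_one hβ m k
  have hSpos : 0 < S := hSd ▸ dd_pos (by positivity) k
  set A := Finset.finsuppAntidiag (Finset.univ : Finset (Fin (m + 1))) k with hA
  set b : (Fin (m + 1) →₀ ℕ) → ℂ := fun α =>
    (((∏ i, mom (AbM β 1) (α i))⁻¹ : ℝ) : ℂ) * conj (mono α x) with hb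
  set F : (Fin (m + 1) → ℂ) → ℂ := fun z => ∑ α ∈ A, b α * mono α z with hF
  have hFd : DifferentiableOn ℂ F (polydisc (m + 1)) := by
    refine Differentiable.differentiableOn ?_
    simp only [hF, mono]
    fun_prop
  have h1 := h F hFd
  have e2 : ∫⁻ z, ENNReal.ofReal (‖F z‖ ^ 2) ∂(Vbeta (m + 1) β) = ENNReal.ofReal S := by
    rw [hF, poly_lint hβ A (fun α i => α i) (fun a _ b _ hab => DFunLike.coe_injective hab) b, hS, SS]
    congr 1
    refine Finset.sum_congr rfl fun α _ => ?_
    have hp : 0 < ∏ i, mom (AbM β 1) (α i) := Finset.prod_pos fun i _ => hg.pos _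
    simp only [hb, norm_mul, Complex.norm_real, RCLike.norm_conj]
    rw [Real.norm_of_nonneg (inv_pos.mpr hp).le]
    field_simp
  have e3 : ∀ z : Fin (m + 1) → ℂ, F (fun i => (∏ j, z j) * x i) =
      ∑ j ∈ {k}, (S : ℂ) * mono (fun _ => j) z := by
    intro z
    rw [Finset.sum_singleton, hF, hS, SS, Complex.ofReal_sum, Finset.sum_mul]
    refine Finset.sum_congr rfl fun α hα => ?_
    have e4 : mono (fun _ => k) z = (∏ j, z j) ^ k := by simp [mono, Finset.prod_pow]
    rw [mono_smul hα, e4, hb]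
    push_cast
    have e5 : ((‖mono α x‖ : ℂ)) ^ 2 = conj (mono α x) * mono α x := by
      rw [Complex.conj_mul']
    rw [e5]; ring
  have e1 : ∫⁻ z, ENNReal.ofReal (‖F fun i => (∏ j, z j) * x i‖ ^ 2) ∂(Vbeta (m + 1) β) =
      ENNReal.ofReal (S ^ 2 * ((dd (β + 2) k)⁻¹) ^ (m + 1)) := by
    simp only [e3]
    rw [poly_lint hβ {k} (fun (j : ℕ) _ => j) (fun a _ b _ hab => congrFun hab 0) (fun _ => (S : ℂ))]
    simp [mom_one hβ]
  rw [e1, e2, ← ENNReal.ofReal_mul hC.le, ENNReal.ofReal_le_ofReal_iff (by positivity)] at h1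
  rw [← hSd]
  have h2 : S * ((dd (β + 2) k)⁻¹) ^ (m + 1) ≤ C := by
    refine le_of_mul_le_mul_right ?_ hSpos
    calc _ = S ^ 2 * ((dd (β + 2) k)⁻¹) ^ (m + 1) := by ring
      _ ≤ _ := h1
  rwa [inv_pow, ← div_eq_mul_inv] at h2

theorem product_symbol_boundedness (n : ℕ) (hn : 2 ≤ n) (β : ℝ) (hβ : -1 < β) :
    bddBergman n β (fun z i => if (i : ℕ) < n - 1 then ∏ j, z j else 0) ↔
      (n : ℝ) ≤ β + 3 := by
  obtain ⟨m, rfl⟩ : ∃ m, n = m + 1 := ⟨n - 1, by lia⟩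
  have hm : 1 ≤ m := by lia
  have hΦ : (fun (z : Fin (m + 1) → ℂ) (i : Fin (m + 1)) =>
      if (i : ℕ) < m + 1 - 1 then ∏ j, z j else 0) =
      fun z i => (∏ j, z j) * xv (m + 1) i := by
    funext z i
    simp only [xv, mul_ite, mul_one, mul_zero]
  have hiff : ((m + 1 : ℕ) : ℝ) ≤ β + 3 ↔ (m : ℝ) ≤ β + 2 := by
    push_cast
    constructor <;> intro h <;> linarith
  rw [hΦ, hiff]
  constructor
  · rintro ⟨C, hC, h⟩
    exact nec hβ hm hC h
  · intro h
    exact suff hβ hm h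

end
end
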